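/- Assume the Riemann Hypothesis. There is a positive absolute constant C such that for all T ≥ 2 and all positive integers k, Σ_{0<γ≤T} m(γ)^{2k−1} = Σ_{0<γ_d≤T} m(γ_d)^{2k} ≤ (Ck)^{2k−1} · T log T, where the first sum is over ordinates counted with multiplicity and the second over distinct ordinates. -/

import Mathlib

open Filter MeasureTheory
open scoped Real

noncomputable section

/-- The multiplicity (order of vanishing) of the Riemann zeta function at a point `z`:
the least `n` such that the `n`-th derivative of `ζ` at `z` is nonzero. -/
def zetaMult (z : ℂ) : ℕ := sInf {n : ℕ | iteratedDeriv n riemannZeta z ≠ 0}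

/-- Under RH, the set of ordinates `γ` with `0 < γ ≤ T` of nontrivial zeros `1/2 + iγ` of `ζ`. -/
def zetaOrds (T : ℝ) : Set ℝ :=
  {γ : ℝ | 0 < γ ∧ γ ≤ T ∧ riemannZeta (1 / 2 + γ * Complex.I) = 0}

/-- The multiplicity of the zero of `ζ` at `1/2 + iγ`. -/
def ordMult (γ : ℝ) : ℕ := zetaMult (1 / 2 + γ * Complex.I)

/-- `N(T)`: the number of ordinates of nontrivial zeros in `(0, T]`, counted with multiplicity. -/
def zetaN (T : ℝ) : ℕ := ∑ᶠ γ ∈ zetaOrds T, ordMult γ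

/-- The next ordinate of a nontrivial zero strictly above `γ`. -/
def nextOrd (γ : ℝ) : ℝ :=
  sInf {γ' : ℝ | γ < γ' ∧ riemannZeta (1 / 2 + γ' * Complex.I) = 0}

/-!
The idea is to bound the multiplicities in short windows by a Dirichlet polynomial whose high
moments are easily controlled.

Under RH the function `ξ(1/2 + z)`, and its quotient by any finite product of zeros on the imaginary
axis, satisfies `|g(z - h)| ≤ |g(z + h)|` for `Re z > 0` by Phragmén–Lindelöf, so `Re (g'/g) ≥ 0`
there. Hence the Poisson sum `∑ m(γ) e / (e² + (t - γ)²)` over any finite set of ordinates is at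
most `Re (ζ'/ζ)(1/2 + e + it) + O(log (|t| + 4))`. Averaging over `t` against the Jackson kernel
`(sin (a y) / (a y))⁴` with `e = 1 / (32 a)`, and moving the line of integration into the region of
absolute convergence, turns `ζ'/ζ` into a Dirichlet polynomial `D` of length `exp (4 a)`:
the number of zeros in `[t - e, t + e]` is `O(|D(t)| + exp (6 a) / |t| + log (|t| + 4) / a)`.

For `t` of size `T` take `a` about `log T / (8 k)`. The last two terms are then `O(k)`, and since
`D ^ k` has length at most `√T`, the mean value of `|D| ^ (2 k)` over `[T / 2, T]` is at most
`(C k) ^ (2 k)`. Summing the `2 k`-th powers of the window counts over windows of length `1 / a`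
bounds the contribution of `T / 2 ≤ γ ≤ T` by `(C k) ^ (2 k) T log T`, and dyadic summation
finishes the proof.
-/

section

open Complex
open scoped ComplexConjugate

/-! ### Zero-free holomorphic functions on a disc -/

section ZeroFreeDisc

variable {F : ℂ → ℂ} {c s : ℂ} {r R M : ℝ}

lemma exists_log_of_ne_zero_on_ball (hR : 0 < R) (hF : DifferentiableOn ℂ F (Metric.ball c R))
    (hF0 : ∀ z ∈ Metric.ball c R, F z ≠ 0) :
    ∃ l : ℂ → ℂ, l c = 0 ∧ (∀ z ∈ Metric.ball c R, HasDerivAt l (logDeriv F z) z) ∧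
      ∀ z ∈ Metric.ball c R, F z = F c * exp (l z) := by
  have hlogDeriv : DifferentiableOn ℂ (logDeriv F) (Metric.ball c R) :=
    (hF.deriv Metric.isOpen_ball).div hF hF0
  obtain ⟨l, hlc, hl⟩ := hlogDeriv.isExactOn_ball.with_val_at c 0
  have hderiv : ∀ z ∈ Metric.ball c R, HasDerivAt (fun w ↦ F w * exp (-l w)) 0 z := by
    intro z hz
    have hFz := (hF.differentiableAt (Metric.isOpen_ball.mem_nhds hz)).hasDerivAt
    refine (hFz.mul (hl z hz).fun_neg.cexp).congr_deriv ?_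
    rw [logDeriv_apply]
    field_simp [hF0 z hz]
    ring
  refine ⟨l, hlc, hl, fun z hz ↦ ?_⟩
  have hconst : F z * exp (-l z) = F c * exp (-l c) :=
    Metric.isOpen_ball.is_const_of_deriv_eq_zero (convex_ball c R).isPreconnected
      (fun w hw ↦ (hderiv w hw).differentiableAt.differentiableWithinAt)
      (fun w hw ↦ (hderiv w hw).deriv) hz (Metric.mem_ball_self hR)
  rw [hlc, neg_zero, exp_zero, mul_one] at hconst
  rw [← hconst, mul_assoc, ← exp_add, neg_add_cancel, exp_zero, mul_one]

lemma exists_log_norm_le_of_norm_le_on_ball (hR : 0 < R) (hM : 0 < M)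
    (hF : DifferentiableOn ℂ F (Metric.ball c R)) (hF0 : ∀ z ∈ Metric.ball c R, F z ≠ 0)
    (hFM : ∀ z ∈ Metric.ball c R, ‖F z‖ ≤ ‖F c‖ * Real.exp M) :
    ∃ l : ℂ → ℂ, (∀ z ∈ Metric.ball c R, HasDerivAt l (logDeriv F z) z) ∧
      (∀ z ∈ Metric.ball c R, F z = F c * exp (l z)) ∧
      ∀ z ∈ Metric.ball c R, ‖l z‖ ≤ 2 * M * ‖z - c‖ / (R - ‖z - c‖) := by
  obtain ⟨l, hlc, hl, hexp⟩ := exists_log_of_ne_zero_on_ball hR hF hF0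
  have hmem : ∀ w ∈ Metric.ball (0 : ℂ) R, w + c ∈ Metric.ball c R := fun w hw ↦ by
    simpa [dist_eq_norm] using hw
  have hre : ∀ z ∈ Metric.ball c R, (l z).re ≤ M := by
    intro z hz
    have hFc : 0 < ‖F c‖ := norm_pos_iff.2 (hF0 c (Metric.mem_ball_self hR))
    have h := hFM z hz
    rw [hexp z hz, norm_mul, norm_exp] at h
    exact Real.exp_le_exp.1 (le_of_mul_le_mul_left h hFc)
  refine ⟨l, hl, hexp, fun z hz ↦ ?_⟩
  have hBC := borelCaratheodory_zero (f := fun w ↦ l (w + c)) (z := z - c) hM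
    (fun w hw ↦ ((hl _ (hmem w hw)).comp_add_const w c).differentiableAt.differentiableWithinAt)
    (fun w hw ↦ hre _ (hmem w hw)) hR (by simpa [dist_eq_norm] using hz) (by simpa using hlc)
  simpa using hBC

lemma mul_exp_neg_le_norm_of_norm_le_on_ball (hr : r < R) (hM : 0 < M)
    (hF : DifferentiableOn ℂ F (Metric.ball c R)) (hF0 : ∀ z ∈ Metric.ball c R, F z ≠ 0)
    (hFM : ∀ z ∈ Metric.ball c R, ‖F z‖ ≤ ‖F c‖ * Real.exp M) (hs : ‖s - c‖ ≤ r) :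
    ‖F c‖ * Real.exp (-(2 * M * R / (R - r))) ≤ ‖F s‖ := by
  have hR : 0 < R := (norm_nonneg _).trans_lt (hs.trans_lt hr)
  obtain ⟨l, -, hexp, hle⟩ := exists_log_norm_le_of_norm_le_on_ball hR hM hF hF0 hFM
  have hsR : s ∈ Metric.ball c R := by simpa [dist_eq_norm] using hs.trans_lt hr
  have hls : ‖l s‖ ≤ 2 * M * R / (R - r) := by
    refine (hle s hsR).trans ?_
    gcongr
    linarith
  rw [hexp s hsR, norm_mul, norm_exp]
  gcongr
  exact (abs_le.1 ((abs_re_le_norm _).trans hls)).1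

lemma norm_logDeriv_le_of_norm_le_on_ball (hr : r < R) (hM : 0 < M)
    (hF : DifferentiableOn ℂ F (Metric.ball c R)) (hF0 : ∀ z ∈ Metric.ball c R, F z ≠ 0)
    (hFM : ∀ z ∈ Metric.ball c R, ‖F z‖ ≤ ‖F c‖ * Real.exp M) (hs : ‖s - c‖ ≤ r) :
    ‖logDeriv F s‖ ≤ 8 * M * R / (R - r) ^ 2 := by
  have hR : 0 < R := (norm_nonneg _).trans_lt (hs.trans_lt hr)
  obtain ⟨l, hl, -, hle⟩ := exists_log_norm_le_of_norm_le_on_ball hR hM hF hF0 hFM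
  set δ := (R - r) / 2 with hδ
  have hδ0 : 0 < δ := by linarith
  have hball : ∀ z ∈ Metric.closedBall s δ, ‖z - c‖ ≤ R - δ := by
    intro z hz
    have h := norm_sub_le_norm_sub_add_norm_sub z s c
    rw [Metric.mem_closedBall, dist_eq_norm] at hz
    linarith
  have hmem : ∀ z ∈ Metric.closedBall s δ, z ∈ Metric.ball c R := fun z hz ↦ by
    rw [Metric.mem_ball, dist_eq_norm]
    linarith [hball z hz]
  have hdiff : DiffContOnCl ℂ l (Metric.ball s δ) := DifferentiableOn.diffContOnCl fun z hz ↦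
    (hl z (hmem z (Metric.closure_ball_subset_closedBall hz))).differentiableAt
      |>.differentiableWithinAt
  have hsphere : ∀ z ∈ Metric.sphere s δ, ‖l z‖ ≤ 2 * M * R / δ := by
    intro z hz
    have hz' := Metric.sphere_subset_closedBall hz
    have hzc := hball z hz'
    refine (hle z (hmem z hz')).trans ?_
    gcongr <;> linarith
  rw [← (hl s (hmem s (Metric.mem_closedBall_self hδ0.le))).deriv]
  calc ‖deriv l s‖ ≤ 2 * M * R / δ / δ :=
        norm_deriv_le_of_forall_mem_sphere_norm_le hδ0 hdiff hsphere
    _ = 8 * M * R / (R - r) ^ 2 := by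
        have : R - r ≠ 0 := by linarith
        rw [hδ]
        field_simp
        ring

end ZeroFreeDisc

/-! ### Bounds for `(s - 1) ζ(s)` -/

/-- The fractional part `{t}` of `t`, set to `0` for `t ≤ 1`. Its Mellin transform at `-s` is
`∫_1^∞ {t} t^{-s-1} dt`. -/
def fractTail : ℝ → ℂ := (Set.Ioi 1).indicator fun t ↦ ((Int.fract t : ℝ) : ℂ)

lemma norm_fractTail_le_one (t : ℝ) : ‖fractTail t‖ ≤ 1 := by
  refine (norm_indicator_le_norm_self _ t).trans ?_
  rw [norm_real, Real.norm_of_nonneg (Int.fract_nonneg t)]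
  exact (Int.fract_lt_one t).le

lemma measurable_fractTail : Measurable fractTail :=
  (measurable_ofReal.comp measurable_fract).indicator measurableSet_Ioi

lemma fractTail_eq_sub_floor {t : ℝ} (ht : 1 < t) : fractTail t = t - ⌊t⌋₊ := by
  rw [fractTail, Set.indicator_of_mem (Set.mem_Ioi.2 ht), Int.fract,
    ← natCast_floor_eq_intCast_floor (by linarith)]
  push_cast
  rfl

lemma differentiableAt_mellin_fractTail {s : ℂ} (hs : s.re < 0) :
    DifferentiableAt ℂ (mellin fractTail) s := by
  refine mellin_differentiableAt_of_isBigO_rpow (a := 0) (b := s.re - 1) ?_ ?_ hs ?_ (by linarith)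
  · refine ((locallyIntegrable_const (1 : ℝ)).mono measurable_fractTail.aestronglyMeasurable
      (ae_of_all _ fun t ↦ ?_)).locallyIntegrableOn _
    simpa using norm_fractTail_le_one t
  · refine Asymptotics.IsBigO.of_bound 1 (Eventually.of_forall fun t ↦ ?_)
    simpa using norm_fractTail_le_one t
  · refine Asymptotics.IsBigO.of_bound 1 ?_
    filter_upwards [Ioo_mem_nhdsGT (zero_lt_one' ℝ)] with t ht
    rw [fractTail, Set.indicator_of_notMem (by simpa using ht.2.le), norm_zero]
    positivity

lemma mellin_fractTail_neg (s : ℂ) :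
    mellin fractTail (-s) = ∫ t in Set.Ioi (1 : ℝ), (t : ℂ) ^ (-s - 1) * fractTail t := by
  rw [mellin, setIntegral_eq_of_subset_of_forall_sdiff_eq_zero measurableSet_Ioi
    (Set.Ioi_subset_Ioi zero_le_one) fun t ht ↦ ?_]
  · simp only [smul_eq_mul]
  · rw [fractTail, Set.indicator_of_notMem ht.2, smul_zero]

lemma norm_mellin_fractTail_neg_le {s : ℂ} (hs : 0 < s.re) :
    ‖mellin fractTail (-s)‖ ≤ 1 / s.re := by
  have hinteg : ∫ t in Set.Ioi (1 : ℝ), t ^ (-s.re - 1) = 1 / s.re := by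
    rw [integral_Ioi_rpow_of_lt (by linarith) zero_lt_one]
    simp
  rw [mellin_fractTail_neg s, ← hinteg]
  refine norm_integral_le_of_norm_le (integrableOn_Ioi_rpow_of_lt (by linarith) zero_lt_one) ?_
  refine (ae_restrict_iff' measurableSet_Ioi).2 (ae_of_all _ fun t ht ↦ ?_)
  have ht0 : 0 < t := zero_lt_one.trans ht
  rw [norm_mul, norm_cpow_eq_rpow_re_of_pos ht0, sub_re, neg_re, one_re]
  exact mul_le_of_le_one_right (by positivity) (norm_fractTail_le_one t)

lemma riemannZeta_eq_sub_mellin_fractTail {s : ℂ} (hs : 1 < s.re) :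
    riemannZeta s = s / (s - 1) - s * mellin fractTail (-s) := by
  have hLSeries := LSeries_eq_mul_integral' (1 : ℕ → ℂ) zero_le_one hs
    (Asymptotics.IsBigO.of_bound 1 (Eventually.of_forall fun n ↦ by simp))
  have hs1 : s - 1 ≠ 0 := fun h ↦ by simpa using hs.ne' (by simpa [sub_eq_zero] using congrArg re h)
  have hmain : ∫ t in Set.Ioi (1 : ℝ), (t : ℂ) ^ (-s) = 1 / (s - 1) := by
    have hs1' : -s + 1 ≠ 0 := fun h ↦ hs1 (by linear_combination -h)
    rw [integral_Ioi_cpow_of_lt (by simpa using hs) zero_lt_one, ofReal_one, one_cpow]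
    field_simp
    ring
  have hint_main : IntegrableOn (fun t : ℝ ↦ (t : ℂ) ^ (-s)) (Set.Ioi 1) :=
    integrableOn_Ioi_cpow_of_lt (by simpa using hs) zero_lt_one
  have hint_fract : IntegrableOn (fun t : ℝ ↦ (t : ℂ) ^ (-s - 1) * fractTail t) (Set.Ioi 1) :=
    Integrable.mul_bdd (c := 1)
      (integrableOn_Ioi_cpow_of_lt (by rw [sub_re, neg_re, one_re]; linarith) zero_lt_one)
      measurable_fractTail.aestronglyMeasurable (ae_of_all _ norm_fractTail_le_one)
  have hfloor : ∀ t ∈ Set.Ioi (1 : ℝ),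
      (∑ k ∈ Finset.Icc 1 ⌊t⌋₊, (1 : ℕ → ℂ) k) * (t : ℂ) ^ (-(s + 1)) =
        (t : ℂ) ^ (-s) - (t : ℂ) ^ (-s - 1) * fractTail t := by
    intro t ht
    have ht0 : (t : ℂ) ≠ 0 := ofReal_ne_zero.2 (zero_lt_one.trans ht).ne'
    have hpow : (t : ℂ) ^ (-s) = (t : ℂ) ^ (-s - 1) * t := by
      rw [cpow_sub _ _ ht0, cpow_one, div_mul_cancel₀ _ ht0]
    simp only [Pi.one_apply, Finset.sum_const, Nat.card_Icc, add_tsub_cancel_right, nsmul_eq_mul,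
      mul_one]
    rw [fractTail_eq_sub_floor ht, hpow, neg_add']
    ring
  rw [← LSeries_one_eq_riemannZeta hs, hLSeries, setIntegral_congr_fun measurableSet_Ioi hfloor,
    integral_sub hint_main hint_fract, hmain, ← mellin_fractTail_neg]
  ring

lemma riemannZeta₁_eq_sub_one_mul {s : ℂ} (hs : s ≠ 1) :
    riemannZeta₁ s = (s - 1) * riemannZeta s := by
  rw [riemannZeta_eq_inv_sub_mul hs, mul_inv_cancel_left₀ (sub_ne_zero.2 hs)]

lemma riemannZeta₁_eq_sub_mellin_fractTail {s : ℂ} (hs : 0 < s.re) :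
    riemannZeta₁ s = s - s * (s - 1) * mellin fractTail (-s) := by
  have hopen : IsOpen {z : ℂ | 0 < z.re} := isOpen_lt continuous_const continuous_re
  have hdiff : DifferentiableOn ℂ (fun s ↦ s - s * (s - 1) * mellin fractTail (-s))
      {z : ℂ | 0 < z.re} := by
    intro z hz
    have hneg : DifferentiableAt ℂ (fun s ↦ mellin fractTail (-s)) z :=
      DifferentiableAt.fun_comp' z (differentiableAt_mellin_fractTail (by simpa using hz))
        differentiableAt_id.neg
    exact DifferentiableAt.differentiableWithinAt (by fun_prop)
  refine AnalyticOnNhd.eqOn_of_preconnected_of_eventuallyEq (z₀ := 2)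
    (differentiable_riemannZeta₁.differentiableOn.analyticOnNhd hopen)
    (hdiff.analyticOnNhd hopen) (convex_halfSpace_re_gt 0).isPreconnected (by simp) ?_ hs
  have hnhds : {z : ℂ | 1 < z.re} ∈ nhds (2 : ℂ) :=
    (isOpen_lt continuous_const continuous_re).mem_nhds (by simp)
  filter_upwards [hnhds] with z hz
  have hz1 : z ≠ 1 := by
    rintro rfl
    simp at hz
  have hz1' : z - 1 ≠ 0 := sub_ne_zero.2 hz1
  rw [riemannZeta₁_eq_sub_one_mul hz1, riemannZeta_eq_sub_mellin_fractTail hz]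
  field_simp

lemma norm_riemannZeta₁_le {s : ℂ} (hs : 1 / 4 ≤ s.re) :
    ‖riemannZeta₁ s‖ ≤ 4 * (‖s‖ + 1) ^ 2 := by
  have hmellin : ‖mellin fractTail (-s)‖ ≤ 4 := by
    refine (norm_mellin_fractTail_neg_le (by linarith)).trans ?_
    rw [div_le_iff₀ (by linarith)]
    linarith
  calc ‖riemannZeta₁ s‖ ≤ ‖s‖ + ‖s‖ * ‖s - 1‖ * ‖mellin fractTail (-s)‖ := by
        rw [riemannZeta₁_eq_sub_mellin_fractTail (by linarith), ← norm_mul, ← norm_mul]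
        exact norm_sub_le _ _
    _ ≤ ‖s‖ + ‖s‖ * (‖s‖ + 1) * 4 := by
        gcongr
        exact (norm_sub_le s 1).trans_eq (by rw [norm_one])
    _ ≤ 4 * (‖s‖ + 1) ^ 2 := by nlinarith [norm_nonneg s]

lemma riemannZeta₁_ne_zero_of_half_lt_re (hRH : RiemannHypothesis) {s : ℂ} (hs : 1 / 2 < s.re) :
    riemannZeta₁ s ≠ 0 := by
  rcases eq_or_ne s 1 with rfl | hs1
  · simp
  rw [riemannZeta₁_eq_sub_one_mul hs1]
  refine mul_ne_zero (sub_ne_zero.2 hs1) fun hzero ↦ hs.ne' (hRH s hzero ?_ hs1)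
  rintro ⟨n, rfl⟩
  have hre : (-2 * ((n : ℂ) + 1)).re = -2 * ((n : ℝ) + 1) := by simp
  rw [hre] at hs
  linarith [n.cast_nonneg (α := ℝ)]

lemma norm_riemannZeta_sub_one_le {s : ℂ} (hs : 2 ≤ s.re) :
    ‖riemannZeta s - 1‖ ≤ π ^ 2 / 6 - 1 := by
  have hbound : ∀ n : ℕ, ‖1 / ((n : ℂ) + 1) ^ s‖ ≤ 1 / ((n : ℝ) + 1) ^ 2 := by
    intro n
    rw [norm_div, norm_one, ← Nat.cast_succ, norm_natCast_cpow_of_pos n.succ_pos,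
      ← Nat.cast_succ, ← Real.rpow_natCast]
    gcongr
    · exact_mod_cast n.succ_pos
    · exact_mod_cast hs
  have hsum : HasSum (fun n : ℕ ↦ 1 / ((n : ℝ) + 1) ^ 2) (π ^ 2 / 6) := by
    have h := (hasSum_nat_add_iff' 1).2 hasSum_zeta_two
    simpa using h
  have hsum_succ : HasSum (fun n : ℕ ↦ 1 / (((n + 1 : ℕ) : ℝ) + 1) ^ 2) (π ^ 2 / 6 - 1) := by
    have h := (hasSum_nat_add_iff' 1).2 hsum
    simpa using h
  have hsummable : Summable fun n : ℕ ↦ 1 / ((n : ℂ) + 1) ^ s :=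
    Summable.of_norm_bounded hsum.summable hbound
  rw [zeta_eq_tsum_one_div_nat_add_one_cpow (by linarith), hsummable.tsum_eq_zero_add]
  simp only [Nat.cast_zero, zero_add, one_cpow, div_one, add_sub_cancel_left]
  exact tsum_of_norm_bounded hsum_succ fun n ↦ hbound (n + 1)

lemma one_fourth_le_norm_riemannZeta {s : ℂ} (hs : 2 ≤ s.re) : 1 / 4 ≤ ‖riemannZeta s‖ := by
  have hsub := norm_riemannZeta_sub_one_le hs
  have htri := norm_le_norm_add_norm_sub' 1 (riemannZeta s)
  rw [norm_one, norm_sub_rev] at htri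
  nlinarith [Real.pi_lt_d4, Real.pi_pos]

lemma norm_riemannZeta_le_two {s : ℂ} (hs : 2 ≤ s.re) : ‖riemannZeta s‖ ≤ 2 := by
  have hsub := norm_riemannZeta_sub_one_le hs
  have htri := norm_le_norm_add_norm_sub' (riemannZeta s) 1
  rw [norm_one] at htri
  nlinarith [Real.pi_lt_d4, Real.pi_pos]

lemma one_fourth_le_norm_riemannZeta₁ {s : ℂ} (hs : 2 ≤ s.re) : 1 / 4 ≤ ‖riemannZeta₁ s‖ := by
  have hs1 : s ≠ 1 := by
    rintro rfl
    norm_num at hs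
  have hnorm : 1 ≤ ‖s - 1‖ := by
    refine le_trans ?_ (re_le_norm _)
    rw [sub_re, one_re]
    linarith
  rw [riemannZeta₁_eq_sub_one_mul hs1, norm_mul]
  nlinarith [one_fourth_le_norm_riemannZeta hs]

/-- The logarithmic size of the height `t`; the shift by `4` makes it at least `1`. -/
def logHeight (t : ℝ) : ℝ := Real.log (|t| + 4)

lemma one_le_logHeight (t : ℝ) : 1 ≤ logHeight t := by
  rw [logHeight, Real.le_log_iff_exp_le (by positivity)]
  linarith [Real.exp_one_lt_d9, abs_nonneg t]

lemma logHeight_le_abs_add_three (t : ℝ) : logHeight t ≤ |t| + 3 := by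
  have h := Real.log_le_sub_one_of_pos (x := |t| + 4) (by positivity)
  rw [logHeight]
  linarith

lemma logHeight_add_le (t y : ℝ) : logHeight (t + y) ≤ logHeight t * (1 + |y|) := by
  have hlog : logHeight (t + y) ≤ logHeight t + |y| := by
    rw [logHeight, Real.log_le_iff_le_exp (by positivity), Real.exp_add, logHeight,
      Real.exp_log (by positivity)]
    nlinarith [abs_add_le t y, Real.add_one_le_exp |y|, abs_nonneg t, abs_nonneg y]
  nlinarith [one_le_logHeight t, abs_nonneg y]

section CriticalStrip

variable {h : ℝ} {s z : ℂ}

lemma half_lt_re_of_mem_ball {t : ℝ} (hz : z ∈ Metric.ball (2 + t * I) (3 / 2)) :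
    1 / 2 < z.re := by
  rw [Metric.mem_ball, dist_eq_norm] at hz
  have habs := (abs_re_le_norm (z - (2 + t * I))).trans_lt hz
  simp only [sub_re, add_re, re_ofNat, mul_I_re, ofReal_im, neg_zero, add_zero] at habs
  linarith [(abs_lt.1 habs).1]

lemma norm_riemannZeta₁_le_on_ball {t : ℝ} (hz : z ∈ Metric.ball (2 + t * I) (3 / 2)) :
    ‖riemannZeta₁ z‖ ≤ ‖riemannZeta₁ (2 + t * I)‖ * Real.exp (5 * logHeight t) := by
  have hnorm : ‖z‖ + 1 ≤ |t| + 6 := by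
    rw [Metric.mem_ball, dist_eq_norm] at hz
    have hcenter : ‖(2 + t * I : ℂ)‖ ≤ 2 + |t| := by
      refine (norm_add_le _ _).trans_eq ?_
      simp
    linarith [norm_le_norm_sub_add z (2 + t * I)]
  have hexp : Real.exp (5 * logHeight t) = (|t| + 4) ^ 5 := by
    rw [mul_comm, Real.exp_mul, logHeight, Real.exp_log (by positivity)]
    norm_cast
  have hcenter := one_fourth_le_norm_riemannZeta₁ (s := 2 + t * I) (by simp)
  have ht := abs_nonneg t
  calc ‖riemannZeta₁ z‖ ≤ 4 * (‖z‖ + 1) ^ 2 :=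
        norm_riemannZeta₁_le (by linarith [half_lt_re_of_mem_ball hz])
    _ ≤ 4 * (|t| + 6) ^ 2 := by gcongr
    _ ≤ 4 * (9 / 4 * (|t| + 4) ^ 2) := by gcongr; nlinarith
    _ ≤ 1 / 4 * ((|t| + 4) ^ 2 * 4 ^ 3) := by nlinarith [sq_nonneg (|t| + 4)]
    _ ≤ 1 / 4 * ((|t| + 4) ^ 2 * (|t| + 4) ^ 3) := by gcongr; linarith
    _ ≤ ‖riemannZeta₁ (2 + t * I)‖ * Real.exp (5 * logHeight t) := by
        rw [hexp, ← pow_add]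
        gcongr

lemma norm_sub_two_add_im_mul_I_le (hs : 1 / 2 + h ≤ s.re) (hs2 : s.re ≤ 2) :
    ‖s - (2 + s.im * I)‖ ≤ 3 / 2 - h := by
  have hreal : s - (2 + s.im * I) = ((s.re - 2 : ℝ) : ℂ) := by
    apply Complex.ext <;> simp
  rw [hreal, norm_real, Real.norm_eq_abs, abs_le]
  constructor <;> linarith

lemma norm_logDeriv_riemannZeta₁_le (hRH : RiemannHypothesis) (hh : 0 < h)
    (hs : 1 / 2 + h ≤ s.re) (hs2 : s.re ≤ 2) :
    ‖logDeriv riemannZeta₁ s‖ ≤ 60 / h ^ 2 * logHeight s.im := by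
  have hM : 0 < 5 * logHeight s.im := by linarith [one_le_logHeight s.im]
  refine (norm_logDeriv_le_of_norm_le_on_ball (sub_lt_self _ hh) hM
    differentiable_riemannZeta₁.differentiableOn
    (fun z hz ↦ riemannZeta₁_ne_zero_of_half_lt_re hRH (half_lt_re_of_mem_ball hz))
    (fun z hz ↦ norm_riemannZeta₁_le_on_ball hz)
    (norm_sub_two_add_im_mul_I_le hs hs2)).trans_eq ?_
  rw [sub_sub_cancel]
  ring

lemma exp_neg_le_norm_riemannZeta₁ (hRH : RiemannHypothesis) (hh : 0 < h)
    (hs : 1 / 2 + h ≤ s.re) (hs2 : s.re ≤ 2) :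
    1 / 4 * Real.exp (-(15 / h * logHeight s.im)) ≤ ‖riemannZeta₁ s‖ := by
  have hM : 0 < 5 * logHeight s.im := by linarith [one_le_logHeight s.im]
  have hlower := mul_exp_neg_le_norm_of_norm_le_on_ball (sub_lt_self _ hh) hM
    differentiable_riemannZeta₁.differentiableOn
    (fun z hz ↦ riemannZeta₁_ne_zero_of_half_lt_re hRH (half_lt_re_of_mem_ball hz))
    (fun z hz ↦ norm_riemannZeta₁_le_on_ball hz)
    (norm_sub_two_add_im_mul_I_le hs hs2)
  have hexponent : 2 * (5 * logHeight s.im) * (3 / 2) / (3 / 2 - (3 / 2 - h)) =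
      15 / h * logHeight s.im := by
    rw [sub_sub_cancel]
    ring
  rw [hexponent] at hlower
  refine le_trans ?_ hlower
  gcongr
  exact one_fourth_le_norm_riemannZeta₁ (by simp)

end CriticalStrip

/-! ### The xi function centred on the critical line -/

/-- The entire function `z ↦ s (s - 1) π^{-s/2} Γ(s/2) ζ(s)` with `s = 1/2 + z`, so that the
critical line becomes the imaginary axis. -/
def centeredXi (z : ℂ) : ℂ :=
  1 - (1 / 2 + z) * (1 / 2 - z) * completedRiemannZeta₀ (1 / 2 + z)

lemma differentiable_centeredXi : Differentiable ℂ centeredXi := by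
  have h := differentiable_completedZeta₀
  unfold centeredXi
  fun_prop

lemma centeredXi_neg (z : ℂ) : centeredXi (-z) = centeredXi z := by
  have h : (1 / 2 + -z : ℂ) = 1 - (1 / 2 + z) := by ring
  rw [centeredXi, centeredXi, h, completedRiemannZeta₀_one_sub]
  ring

lemma centeredXi_sub_half {s : ℂ} (hs : 0 < s.re) :
    centeredXi (s - 1 / 2) = s * riemannZeta₁ s * Gammaℝ s := by
  rcases eq_or_ne s 1 with rfl | hs1
  · rw [centeredXi]
    norm_num
  have hs0 : s ≠ 0 := by
    rintro rfl
    simp at hs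
  have hΓ := Gammaℝ_ne_zero_of_re_pos hs
  have hs1' : 1 - s ≠ 0 := sub_ne_zero.2 hs1.symm
  rw [riemannZeta₁_eq_sub_one_mul hs1, riemannZeta_def_of_ne_zero hs0, centeredXi,
    add_sub_cancel, show (1 / 2 - (s - 1 / 2) : ℂ) = 1 - s by ring, completedRiemannZeta_eq s]
  field_simp
  ring

lemma Gammaℝ_conj (s : ℂ) : Gammaℝ (conj s) = conj (Gammaℝ s) := by
  have hneg : -conj s / 2 = conj (-s / 2) := by rw [map_div₀, map_neg, map_ofNat]
  have hhalf : conj s / 2 = conj (s / 2) := by rw [map_div₀, map_ofNat]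
  have harg : arg (π : ℂ) ≠ π := by
    rw [arg_ofReal_of_nonneg Real.pi_pos.le]
    exact Real.pi_pos.ne
  rw [Gammaℝ_def, Gammaℝ_def, map_mul, hneg, hhalf, Gamma_conj, cpow_conj _ _ harg, conj_ofReal]

lemma riemannZeta₁_conj (s : ℂ) : riemannZeta₁ (conj s) = conj (riemannZeta₁ s) := by
  rcases eq_or_ne s 1 with rfl | hs
  · simp
  have hs' : conj s ≠ 1 := fun h ↦ hs (by simpa using congrArg conj h)
  rw [riemannZeta₁_eq_sub_one_mul hs, riemannZeta₁_eq_sub_one_mul hs', riemannZeta_conj]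
  simp

lemma centeredXi_conj (z : ℂ) : centeredXi (conj z) = conj (centeredXi z) := by
  have hright : ∀ w : ℂ, 0 ≤ w.re → centeredXi (conj w) = conj (centeredXi w) := by
    intro w hw
    have hre : 0 < (w + 1 / 2).re := by
      simp only [add_re, one_div, inv_re, re_ofNat, normSq_ofNat]
      linarith
    have h1 := centeredXi_sub_half hre
    have h2 := centeredXi_sub_half (s := conj (w + 1 / 2)) (by simpa using hre)
    rw [add_sub_cancel_right] at h1
    rw [h1, map_mul, map_mul, ← Gammaℝ_conj, ← riemannZeta₁_conj, ← h2]
    simp only [map_add, map_div₀, map_one, map_ofNat, add_sub_cancel_right]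
  rcases le_total 0 z.re with hz | hz
  · exact hright z hz
  · have h := hright (-z) (by simpa using hz)
    rwa [map_neg, centeredXi_neg, centeredXi_neg] at h

lemma norm_centeredXi_neg_conj (z : ℂ) : ‖centeredXi (-conj z)‖ = ‖centeredXi z‖ := by
  rw [centeredXi_neg, centeredXi_conj, norm_conj]

lemma centeredXi_ne_zero (hRH : RiemannHypothesis) {z : ℂ} (hz : 0 < z.re) :
    centeredXi z ≠ 0 := by
  have hre : (1 / 2 + z).re = 1 / 2 + z.re := by simp
  have h := centeredXi_sub_half (s := 1 / 2 + z) (by linarith)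
  rw [add_sub_cancel_left] at h
  rw [h]
  refine mul_ne_zero (mul_ne_zero ?_ (riemannZeta₁_ne_zero_of_half_lt_re hRH (by linarith)))
    (Gammaℝ_ne_zero_of_re_pos (by linarith))
  rintro h0
  rw [h0, zero_re] at hre
  linarith

/-! ### Growth of `ξ(z - h) / ξ(z + h)` -/

section Growth

variable {x h : ℝ} {s u : ℂ}

lemma norm_betaIntegral_le (hx : 0 < x) (hxu : x ≤ u.re) (hh : 0 < h) :
    ‖betaIntegral u h‖ ≤ ProbabilityTheory.beta x h := by
  have hnorm : ∀ v : ℂ, ∀ t ∈ Set.Ioo (0 : ℝ) 1,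
      ‖(t : ℂ) ^ (v - 1) * (1 - (t : ℂ)) ^ ((h : ℂ) - 1)‖ = t ^ (v.re - 1) * (1 - t) ^ (h - 1) := by
    intro v t ht
    rw [norm_mul, norm_cpow_eq_rpow_re_of_pos ht.1, ← ofReal_one, ← ofReal_sub,
      norm_cpow_eq_rpow_re_of_pos (sub_pos.2 ht.2)]
    simp
  have hinteg : ∀ v : ℂ, 0 < v.re → IntegrableOn
      (fun t : ℝ ↦ t ^ (v.re - 1) * (1 - t) ^ (h - 1)) (Set.Ioo 0 1) := by
    intro v hv
    have hconv := (betaIntegral_convergent (v := h) hv (by simpa using hh)).norm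
    rw [intervalIntegrable_iff_integrableOn_Ioo_of_le zero_le_one] at hconv
    exact hconv.congr_fun (hnorm v) measurableSet_Ioo
  have hbeta : ProbabilityTheory.beta x h = ∫ t in Set.Ioo (0 : ℝ) 1,
      t ^ (x - 1) * (1 - t) ^ (h - 1) := by
    rw [ProbabilityTheory.beta_eq_betaIntegralReal x h hx hh, betaIntegral,
      intervalIntegral.integral_of_le zero_le_one, integral_Ioc_eq_integral_Ioo]
    rw [← ofReal_re (∫ t in Set.Ioo (0 : ℝ) 1, t ^ (x - 1) * (1 - t) ^ (h - 1)),
      ← integral_complex_ofReal]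
    congr 1
    refine setIntegral_congr_fun measurableSet_Ioo fun t ht ↦ ?_
    simp only [ofReal_mul, ofReal_cpow ht.1.le, ofReal_cpow (sub_pos.2 ht.2).le, ofReal_sub,
      ofReal_one]
  rw [betaIntegral, intervalIntegral.integral_of_le zero_le_one, integral_Ioc_eq_integral_Ioo,
    hbeta]
  refine norm_integral_le_of_norm_le (hinteg x hx) ?_
  refine (ae_restrict_iff' measurableSet_Ioo).2 (ae_of_all _ fun t ht ↦ ?_)
  have ht1 : 0 ≤ 1 - t := by linarith [ht.2]
  rw [hnorm u t ht]
  gcongr ?_ * _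
  exact Real.rpow_le_rpow_of_exponent_ge ht.1 ht.2.le (by linarith)

lemma norm_Gamma_le_mul_norm_Gamma_add (hx : 0 < x) (hxu : x ≤ u.re) (hh : 0 < h) :
    ‖Gamma u‖ ≤ Real.Gamma x / Real.Gamma (x + h) * ‖Gamma (u + h)‖ := by
  have hΓh := Real.Gamma_pos_of_pos hh
  have hbeta := congrArg norm (Gamma_mul_Gamma_eq_betaIntegral (s := u) (t := h) (by linarith)
    (by simpa using hh))
  rw [norm_mul, norm_mul, Gamma_ofReal, norm_real, Real.norm_of_nonneg hΓh.le] at hbeta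
  refine le_of_mul_le_mul_right ?_ hΓh
  calc ‖Gamma u‖ * Real.Gamma h = ‖Gamma (u + h)‖ * ‖betaIntegral u h‖ := hbeta
    _ ≤ ‖Gamma (u + h)‖ * ProbabilityTheory.beta x h := by
        gcongr
        exact norm_betaIntegral_le hx hxu hh
    _ = Real.Gamma x / Real.Gamma (x + h) * ‖Gamma (u + h)‖ * Real.Gamma h := by
        rw [ProbabilityTheory.beta]
        ring

lemma norm_Gammaℝ (s : ℂ) : ‖Gammaℝ s‖ = π ^ (-s.re / 2) * ‖Gamma (s / 2)‖ := by
  rw [Gammaℝ_def, norm_mul, norm_cpow_eq_rpow_re_of_pos Real.pi_pos]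
  simp

lemma norm_Gammaℝ_sub_le (hx : 0 < x) (hh : 0 < h) (hs : 2 * x + h ≤ s.re) :
    ‖Gammaℝ (s - h)‖ ≤
      π ^ h * (Real.Gamma x / Real.Gamma (x + h)) * ‖Gammaℝ (s + h)‖ := by
  have hΓ : ‖Gamma ((s - h) / 2)‖ ≤
      Real.Gamma x / Real.Gamma (x + h) * ‖Gamma ((s + h) / 2)‖ := by
    rw [show (s + h) / 2 = (s - h) / 2 + h by ring]
    refine norm_Gamma_le_mul_norm_Gamma_add hx ?_ hh
    rw [div_ofNat_re, sub_re, ofReal_re]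
    linarith
  have hpow : π ^ (-(s - h).re / 2) = π ^ h * π ^ (-(s + h).re / 2) := by
    rw [← Real.rpow_add Real.pi_pos, sub_re, add_re, ofReal_re]
    ring_nf
  rw [norm_Gammaℝ, norm_Gammaℝ, hpow]
  calc π ^ h * π ^ (-(s + h).re / 2) * ‖Gamma ((s - h) / 2)‖
      ≤ π ^ h * π ^ (-(s + h).re / 2) *
          (Real.Gamma x / Real.Gamma (x + h) * ‖Gamma ((s + h) / 2)‖) := by gcongr
    _ = _ := by ring

lemma norm_sub_ofReal_le_norm_add_ofReal (hs : 0 ≤ s.re) (hh : 0 ≤ h) : ‖s - h‖ ≤ ‖s + h‖ := by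
  rw [← sq_le_sq₀ (norm_nonneg _) (norm_nonneg _), Complex.sq_norm, Complex.sq_norm,
    normSq_apply, normSq_apply]
  simp only [sub_re, add_re, sub_im, add_im, ofReal_re, ofReal_im]
  nlinarith [mul_nonneg hs hh]

lemma exp_neg_norm_le_norm_riemannZeta₁_add (hRH : RiemannHypothesis) (hh : 0 < h)
    (hs : 1 / 2 ≤ s.re) :
    1 / 4 * Real.exp (-(15 / h * (‖s‖ + 3))) ≤ ‖riemannZeta₁ (s + h)‖ := by
  have hre : (s + h).re = s.re + h := by simp
  rcases le_total (s + h).re 2 with h2 | h2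
  · refine le_trans ?_ (exp_neg_le_norm_riemannZeta₁ hRH hh (by linarith) h2)
    gcongr
    refine (logHeight_le_abs_add_three _).trans ?_
    rw [add_im, ofReal_im, add_zero]
    gcongr
    exact abs_im_le_norm s
  · refine le_trans ?_ (one_fourth_le_norm_riemannZeta₁ h2)
    have hexp : Real.exp (-(15 / h * (‖s‖ + 3))) ≤ 1 :=
      Real.exp_le_one_iff.2 (neg_nonpos.2 (by positivity))
    linarith

lemma norm_riemannZeta₁_sub_le_exp_mul (hRH : RiemannHypothesis) (hh : 0 < h) (hh' : h ≤ 1 / 4)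
    (hs : 1 / 2 ≤ s.re) :
    ‖riemannZeta₁ (s - h)‖ ≤ 16 * Real.exp (4 + 45 / h) * Real.exp ((15 / h + 2) * ‖s‖) *
      ‖riemannZeta₁ (s + h)‖ := by
  have hnorm : ‖s - h‖ + 1 ≤ Real.exp (‖s‖ + 2) := by
    have h1 := norm_sub_le s h
    rw [norm_real, Real.norm_of_nonneg hh.le] at h1
    linarith [Real.add_one_le_exp (‖s‖ + 2)]
  have hsplit : Real.exp (2 * (‖s‖ + 2)) = Real.exp (4 + 45 / h) *
      Real.exp ((15 / h + 2) * ‖s‖) * Real.exp (-(15 / h * (‖s‖ + 3))) := by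
    rw [← Real.exp_add, ← Real.exp_add]
    congr 1
    ring
  calc ‖riemannZeta₁ (s - h)‖ ≤ 4 * (‖s - h‖ + 1) ^ 2 :=
        norm_riemannZeta₁_le (by rw [sub_re, ofReal_re]; linarith)
    _ ≤ 4 * Real.exp (‖s‖ + 2) ^ 2 := by gcongr
    _ = 16 * Real.exp (4 + 45 / h) * Real.exp ((15 / h + 2) * ‖s‖) *
          (1 / 4 * Real.exp (-(15 / h * (‖s‖ + 3)))) := by
        rw [← Real.exp_nat_mul, Nat.cast_ofNat, hsplit]
        ring
    _ ≤ _ := by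
        gcongr
        exact exp_neg_norm_le_norm_riemannZeta₁_add hRH hh hs

lemma norm_riemannZeta₁_sub_le_eight_mul (hh : 0 ≤ h) (hs : 2 + h ≤ s.re) :
    ‖riemannZeta₁ (s - h)‖ ≤ 8 * ‖riemannZeta₁ (s + h)‖ := by
  have hsub : 2 ≤ (s - h).re := by rw [sub_re, ofReal_re]; linarith
  have hadd : 2 ≤ (s + h).re := by rw [add_re, ofReal_re]; linarith
  have hne_one : ∀ z : ℂ, 2 ≤ z.re → z ≠ 1 := by
    rintro z hz rfl
    norm_num at hz
  have hnorm := norm_sub_ofReal_le_norm_add_ofReal (s := s - 1)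
    (by rw [sub_re, one_re]; linarith) hh
  rw [sub_right_comm, sub_add_eq_add_sub] at hnorm
  rw [riemannZeta₁_eq_sub_one_mul (hne_one _ hsub), riemannZeta₁_eq_sub_one_mul (hne_one _ hadd),
    norm_mul, norm_mul]
  calc ‖s - h - 1‖ * ‖riemannZeta (s - h)‖ ≤ ‖s + h - 1‖ * (8 * ‖riemannZeta (s + h)‖) := by
        gcongr
        linarith [norm_riemannZeta_le_two hsub, one_fourth_le_norm_riemannZeta hadd]
    _ = _ := by ring

lemma norm_centeredXi_sub_le {C : ℝ} (hh : 0 < h) (hh' : h ≤ 1 / 4) (hs : 1 / 2 ≤ s.re)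
    (hζ : ‖riemannZeta₁ (s - h)‖ ≤ C * ‖riemannZeta₁ (s + h)‖) :
    ‖centeredXi (s - 1 / 2 - h)‖ ≤ π ^ h * (Real.Gamma (1 / 8) / Real.Gamma (1 / 8 + h)) * C *
      ‖centeredXi (s - 1 / 2 + h)‖ := by
  have hΓ := norm_Gammaℝ_sub_le (x := 1 / 8) (by norm_num) hh (s := s) (by linarith)
  have hnorm := norm_sub_ofReal_le_norm_add_ofReal (s := s) (by linarith) hh.le
  have hCζ : 0 ≤ C * ‖riemannZeta₁ (s + h)‖ := (norm_nonneg _).trans hζ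
  rw [sub_right_comm, sub_add_eq_add_sub, centeredXi_sub_half (by rw [sub_re, ofReal_re]; linarith),
    centeredXi_sub_half (by rw [add_re, ofReal_re]; linarith)]
  simp only [norm_mul]
  calc ‖s - h‖ * ‖riemannZeta₁ (s - h)‖ * ‖Gammaℝ (s - h)‖
      ≤ ‖s + h‖ * (C * ‖riemannZeta₁ (s + h)‖) *
          (π ^ h * (Real.Gamma (1 / 8) / Real.Gamma (1 / 8 + h)) * ‖Gammaℝ (s + h)‖) := by gcongr
    _ = _ := by ring

end Growth

open Asymptotics Bornology in
lemma centeredXi_sub_isBigO_exp_mul (hRH : RiemannHypothesis) {h : ℝ} (hh : 0 < h)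
    (hh' : h ≤ 1 / 4) :
    (fun z ↦ centeredXi (z - h)) =O[cobounded ℂ ⊓ 𝓟 {z | 0 < z.re}]
      fun z ↦ Real.exp ((15 / h + 2) * ‖z‖) * centeredXi (z + h) := by
  refine IsBigO.of_bound (π ^ h * (Real.Gamma (1 / 8) / Real.Gamma (1 / 8 + h)) *
    (16 * Real.exp (4 + 45 / h) * Real.exp ((15 / h + 2) * (1 / 2)))) ?_
  filter_upwards [mem_inf_of_right (mem_principal_self _)] with z (hz : 0 < z.re)
  have hs : 1 / 2 ≤ (z + 1 / 2).re := by simpa using hz.le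
  have hbound := norm_centeredXi_sub_le hh hh' hs (norm_riemannZeta₁_sub_le_exp_mul hRH hh hh' hs)
  have hnorm : ‖z + 1 / 2‖ ≤ 1 / 2 + ‖z‖ := by
    have h := norm_add_le z (1 / 2)
    norm_num at h ⊢
    linarith
  rw [add_sub_cancel_right] at hbound
  rw [norm_mul, norm_real, Real.norm_of_nonneg (Real.exp_nonneg _)]
  calc ‖centeredXi (z - h)‖ ≤ _ := hbound
    _ ≤ π ^ h * (Real.Gamma (1 / 8) / Real.Gamma (1 / 8 + h)) * (16 * Real.exp (4 + 45 / h) *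
          Real.exp ((15 / h + 2) * (1 / 2 + ‖z‖))) * ‖centeredXi (z + h)‖ := by gcongr
    _ = _ := by
        rw [mul_add (15 / h + 2) (1 / 2), Real.exp_add (_ * (1 / 2))]
        ring

open Asymptotics in
lemma centeredXi_sub_isBigO_atTop {h : ℝ} (hh : 0 < h) (hh' : h ≤ 1 / 4) :
    (fun x : ℝ ↦ centeredXi (x - h)) =O[atTop] fun x : ℝ ↦ centeredXi (x + h) := by
  refine IsBigO.of_bound (π ^ h * (Real.Gamma (1 / 8) / Real.Gamma (1 / 8 + h)) * 8)
    ((eventually_ge_atTop 2).mono fun x hx ↦ ?_)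
  have hre : (x + 1 / 2 : ℂ).re = x + 1 / 2 := by simp
  have hbound := norm_centeredXi_sub_le (s := x + 1 / 2) hh hh' (by linarith)
    (norm_riemannZeta₁_sub_le_eight_mul hh.le (by linarith))
  rwa [add_sub_cancel_right] at hbound

/-! ### Positivity of `Re (g'/g)` in a half-plane -/

lemma re_logDeriv_le_of_norm_add_le_mul_exp {f : ℂ → ℂ} {s : ℂ} {A : ℝ}
    (hf : DifferentiableAt ℂ f s) (hfs : f s ≠ 0)
    (h : ∀ᶠ x : ℝ in nhdsWithin 0 (Set.Ioi 0), ‖f (s + x)‖ ≤ ‖f s‖ * Real.exp (A * x)) :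
    (logDeriv f s).re ≤ A := by
  have hderiv : HasDerivAt (fun x : ℝ ↦ f (s + x)) (deriv f s) 0 := by
    have hfs' : HasDerivAt f (deriv f s) (s + (0 : ℝ)) := by simpa using hf.hasDerivAt
    simpa using (hfs'.comp_const_add s ((0 : ℝ) : ℂ)).comp_ofReal
  have hnorm : HasDerivAt (fun x : ℝ ↦ ‖f (s + x)‖ ^ 2) (2 * inner ℝ (f s) (deriv f s)) 0 := by
    simpa using hderiv.norm_sq
  have hexp : HasDerivAt (fun x : ℝ ↦ (‖f s‖ * Real.exp (A * x)) ^ 2) (‖f s‖ ^ 2 * (2 * A)) 0 := by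
    refine ((((hasDerivAt_id' (0 : ℝ)).const_mul A).exp.const_mul ‖f s‖).fun_pow 2).congr_deriv ?_
    simp only [Nat.cast_ofNat, mul_zero, Real.exp_zero, mul_one, Nat.add_one_sub_one, pow_one,
      one_mul]
    ring
  have hinner : 0 ≤ ‖f s‖ ^ 2 * (2 * A) - 2 * inner ℝ (f s) (deriv f s) := by
    refine ge_of_tendsto (hexp.fun_sub hnorm).tendsto_slope_zero_right ?_
    filter_upwards [h, self_mem_nhdsWithin] with x hx (hx0 : 0 < x)
    have hsq : ‖f (s + x)‖ ^ 2 ≤ (‖f s‖ * Real.exp (A * x)) ^ 2 := by gcongr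
    simp only [smul_eq_mul, zero_add, mul_zero, Real.exp_zero, mul_one, ofReal_zero, add_zero,
      sub_self, sub_zero]
    exact mul_nonneg (inv_nonneg.2 hx0.le) (sub_nonneg.2 hsq)
  have hre : (logDeriv f s).re * ‖f s‖ ^ 2 = inner ℝ (f s) (deriv f s) := by
    have hsq : normSq (f s) ≠ 0 := by simpa using hfs
    rw [logDeriv_apply, Complex.inner, div_re, ← normSq_eq_norm_sq]
    field_simp
    simp
  have hpos : 0 < ‖f s‖ ^ 2 := by positivity
  rw [← hre] at hinner
  nlinarith

open Asymptotics Bornology in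
/-- Entire functions sharing the properties that `centeredXi` has under the Riemann hypothesis:
no zeros in the right half-plane, modulus symmetric about the imaginary axis, and `g(z-h)/g(z+h)`
of exponential growth in the half-plane and bounded far out on the real axis. These are what the
Phragmén–Lindelöf principle needs to give `|g(z-h)| ≤ |g(z+h)|`, and they survive dividing `g` by
its zeros on the imaginary axis. -/
structure XiLike (g : ℂ → ℂ) : Prop where
  differentiable : Differentiable ℂ g
  ne_zero : ∀ z : ℂ, 0 < z.re → g z ≠ 0
  norm_neg_conj : ∀ z : ℂ, 0 < z.re → ‖g (-conj z)‖ = ‖g z‖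
  sub_isBigO_exp_mul : ∀ h : ℝ, 0 < h → h ≤ 1 / 4 → ∃ B : ℝ,
    (fun z ↦ g (z - h)) =O[cobounded ℂ ⊓ 𝓟 {z | 0 < z.re}] fun z ↦ Real.exp (B * ‖z‖) * g (z + h)
  sub_isBigO_atTop : ∀ h : ℝ, 0 < h → h ≤ 1 / 4 →
    (fun x : ℝ ↦ g (x - h)) =O[atTop] fun x : ℝ ↦ g (x + h)

lemma xiLike_centeredXi (hRH : RiemannHypothesis) : XiLike centeredXi where
  differentiable := differentiable_centeredXi
  ne_zero _ hz := centeredXi_ne_zero hRH hz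
  norm_neg_conj z _ := norm_centeredXi_neg_conj z
  sub_isBigO_exp_mul h hh hh' := ⟨15 / h + 2, centeredXi_sub_isBigO_exp_mul hRH hh hh'⟩
  sub_isBigO_atTop _ hh hh' := centeredXi_sub_isBigO_atTop hh hh'

section XiLike

open Asymptotics Bornology

variable {f g : ℂ → ℂ} {s z : ℂ}

lemma div_isBigO_of_isBigO_mul {ι : Type*} {l : Filter ι} {u v E : ι → ℂ}
    (hv : ∀ᶠ i in l, v i ≠ 0) (h : u =O[l] fun i ↦ E i * v i) : (fun i ↦ u i / v i) =O[l] E := by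
  refine (h.mul (isBigO_refl (fun i ↦ (v i)⁻¹) l)).congr' ?_ ?_
  · exact Eventually.of_forall fun i ↦ (div_eq_mul_inv _ _).symm
  · filter_upwards [hv] with i hi
    exact mul_inv_cancel_right₀ hi _

lemma XiLike.norm_le_norm_add (hg : XiLike g) {x : ℝ} (hs : 0 < s.re) (hx : 0 < x)
    (hx' : x ≤ 1 / 2) : ‖g s‖ ≤ ‖g (s + x)‖ := by
  set h := x / 2 with hh
  have hne : ∀ z : ℂ, 0 ≤ z.re → g (z + h) ≠ 0 := fun z hz ↦
    hg.ne_zero _ (by rw [add_re, ofReal_re]; linarith)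
  have hne_right : ∀ᶠ z in cobounded ℂ ⊓ 𝓟 {z : ℂ | 0 < z.re}, g (z + h) ≠ 0 := by
    filter_upwards [mem_inf_of_right (mem_principal_self _)] with z (hz : 0 < z.re)
      using hne z hz.le
  obtain ⟨B, hB⟩ := hg.sub_isBigO_exp_mul h (by linarith) (by linarith)
  have hbound : ‖g (s + h - h) / g (s + h + h)‖ ≤ 1 := by
    refine PhragmenLindelof.right_half_plane_of_bounded_on_real
      (f := fun z ↦ g (z - h) / g (z + h)) ?_ ⟨1, by norm_num, B, ?_⟩ ?_ (fun y ↦ ?_) ?_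
    · refine DifferentiableOn.diffContOnCl fun z hz ↦ ?_
      rw [closure_setOfPred_lt_re] at hz
      have hsub : Differentiable ℂ fun z ↦ g (z - h) := hg.differentiable.comp (by fun_prop)
      have hadd : Differentiable ℂ fun z ↦ g (z + h) := hg.differentiable.comp (by fun_prop)
      exact ((hsub z).fun_div (hadd z) (hne z hz)).differentiableWithinAt
    · simp only [Real.rpow_one]
      rw [← isBigO_ofReal_right]
      exact div_isBigO_of_isBigO_mul hne_right hB
    · have hne_real : ∀ᶠ y : ℝ in atTop, g (y + h) ≠ 0 := by
        filter_upwards [eventually_ge_atTop 0] with y hy using hne y (by simpa using hy)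
      have hreal := hg.sub_isBigO_atTop h (by linarith) (by linarith)
      exact ((isBigO_one_iff ℂ).1 (div_isBigO_of_isBigO_mul hne_real (by simpa using hreal)))
    · have hrefl := hg.norm_neg_conj (y * I + h) <| by
        simp only [add_re, re_ofReal_mul, I_re, ofReal_re]
        linarith
      have hconj : -conj (y * I + h) = y * I - h := by
        simp only [map_add, map_mul, conj_ofReal, conj_I, mul_neg, neg_add_rev, neg_neg]
        ring
      rw [hconj] at hrefl
      rw [norm_div, hrefl]
      exact div_self_le_one _
    · rw [add_re, ofReal_re]
      linarith
  have hsum : s + h + h = s + x := by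
    rw [hh]
    push_cast
    ring
  have hpos : 0 < ‖g (s + x)‖ := norm_pos_iff.2 (hg.ne_zero _ (by rw [add_re, ofReal_re]; linarith))
  rwa [hsum, add_sub_cancel_right, norm_div, div_le_one hpos] at hbound

lemma XiLike.re_logDeriv_nonneg (hg : XiLike g) (hs : 0 < s.re) : 0 ≤ (logDeriv g s).re := by
  have hgs := hg.ne_zero s hs
  have hinv : logDeriv (fun z ↦ (g z)⁻¹) s = -logDeriv g s := by
    have h := logDeriv_fun_zpow (hg.differentiable s) (-1)
    simpa using h
  have hle := re_logDeriv_le_of_norm_add_le_mul_exp (A := 0)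
    ((hg.differentiable s).fun_inv hgs) (inv_ne_zero hgs) (by
      filter_upwards [Ioo_mem_nhdsGT (show (0 : ℝ) < 1 / 2 by norm_num)] with x hx
      rw [zero_mul, Real.exp_zero, mul_one, norm_inv, norm_inv]
      exact inv_anti₀ (norm_pos_iff.2 hgs) (hg.norm_le_norm_add hs hx.1 hx.2.le))
  rw [hinv, neg_re] at hle
  linarith

lemma XiLike.of_eq_mul {P : ℂ → ℂ} (hf : XiLike f) (hg : Differentiable ℂ g)
    (hP_neg_conj : ∀ z, ‖P (-conj z)‖ = ‖P z‖) (hP_ne : ∀ᶠ z in cobounded ℂ, P z ≠ 0)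
    (hP_add : ∀ h : ℝ, (fun z ↦ P (z + h)) =O[cobounded ℂ] fun z ↦ P (z - h))
    (hfg : ∀ z, f z = P z * g z) : XiLike g := by
  have hquot : ∀ {ι : Type} {l : Filter ι} {u E : ι → ℂ} {h : ℝ}, Tendsto u l (cobounded ℂ) →
      (fun i ↦ f (u i - h)) =O[l] (fun i ↦ E i * f (u i + h)) →
      (fun i ↦ g (u i - h)) =O[l] (fun i ↦ E i * g (u i + h)) := by
    intro ι l u E h hu hfE
    have hne : ∀ᶠ i in l, P (u i - h) ≠ 0 :=
      ((tendsto_sub_const_cobounded (h : ℂ)).comp hu).eventually hP_ne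
    have hmul : (fun i ↦ P (u i - h) * g (u i - h)) =O[l]
        fun i ↦ P (u i - h) * (E i * g (u i + h)) := by
      have hstep := ((hP_add h).comp_tendsto hu).mul (isBigO_refl (fun i ↦ E i * g (u i + h)) l)
      refine (hfE.congr (fun i ↦ hfg _) fun i ↦ ?_).trans hstep
      simp only [hfg, Function.comp_apply]
      ring
    refine ((isBigO_mul_iff_isBigO_div hne).1 hmul).congr' EventuallyEq.rfl ?_
    filter_upwards [hne] with i hi
    exact mul_div_cancel_left₀ _ hi
  refine ⟨hg, fun z hz h0 ↦ hf.ne_zero z hz (by rw [hfg, h0, mul_zero]), fun z hz ↦ ?_,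
    fun h hh hh' ↦ ?_, fun h hh hh' ↦ ?_⟩
  · have hPz : ‖P z‖ ≠ 0 := norm_ne_zero_iff.2 fun h0 ↦
      hf.ne_zero z hz (by rw [hfg, h0, zero_mul])
    have hnorm := hf.norm_neg_conj z hz
    rw [hfg, hfg, norm_mul, norm_mul, hP_neg_conj] at hnorm
    exact mul_left_cancel₀ hPz hnorm
  · obtain ⟨B, hB⟩ := hf.sub_isBigO_exp_mul h hh hh'
    exact ⟨B, hquot (tendsto_id'.2 inf_le_left) hB⟩
  · simpa using hquot (E := fun _ ↦ 1) (RCLike.tendsto_ofReal_atTop_cobounded ℂ)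
      (by simpa using hf.sub_isBigO_atTop h hh hh')

lemma exists_eq_sub_pow_mul_of_le_analyticOrderAt (hf : Differentiable ℂ f) {n : ℕ}
    (hn : n ≤ analyticOrderAt f s) :
    ∃ g, Differentiable ℂ g ∧ ∀ z, f z = (z - s) ^ n * g z := by
  induction n with
  | zero => exact ⟨f, hf, by simp⟩
  | succ n ih =>
    obtain ⟨g, hg, hfg⟩ := ih (le_trans (by gcongr; exact n.le_succ) hn)
    have hgs : g s = 0 := by
      have horder : analyticOrderAt f s = n + analyticOrderAt g s := by
        have hlin : AnalyticAt ℂ (fun z ↦ z - s) s := by fun_prop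
        have hlin_order : analyticOrderAt (fun z ↦ z - s) s = 1 :=
          hlin.analyticOrderAt_eq_one_of_zero_deriv_ne_zero (by simp) (by simp)
        rw [show f = (fun z ↦ z - s) ^ n * g from funext hfg,
          analyticOrderAt_mul (hlin.pow n) (hg.analyticAt s), analyticOrderAt_pow hlin, hlin_order]
        simp
      refine apply_eq_zero_of_analyticOrderAt_ne_zero fun h0 ↦ ?_
      rw [horder, h0, add_zero] at hn
      exact absurd (Nat.cast_le.1 hn) (by simp)
    refine ⟨dslope g s, ?_, fun z ↦ ?_⟩
    · rw [← differentiableOn_univ, differentiableOn_dslope univ_mem]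
      exact hg.differentiableOn
    · have hslope := sub_smul_dslope g s z
      rw [hgs, sub_zero, smul_eq_mul] at hslope
      rw [hfg, ← hslope, pow_succ, mul_assoc]

lemma exists_eq_prod_sub_pow_mul_of_le_analyticOrderAt {ι : Type*} {S : Finset ι} {ρ : ι → ℂ}
    {n : ι → ℕ} (hf : Differentiable ℂ f) (hρ : Set.InjOn ρ S)
    (hn : ∀ i ∈ S, n i ≤ analyticOrderAt f (ρ i)) :
    ∃ g, Differentiable ℂ g ∧ ∀ z, f z = (∏ i ∈ S, (z - ρ i) ^ n i) * g z := by
  induction S using Finset.cons_induction with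
  | empty => exact ⟨f, hf, by simp⟩
  | cons a S ha ih =>
    obtain ⟨g, hg, hfg⟩ := ih (hρ.mono (by simp)) fun i hi ↦ hn i (Finset.mem_cons_of_mem hi)
    have hprod : ∏ i ∈ S, (ρ a - ρ i) ^ n i ≠ 0 := by
      refine Finset.prod_ne_zero_iff.2 fun i hi ↦ pow_ne_zero _ (sub_ne_zero.2 fun h ↦ ha ?_)
      rwa [hρ (by simp) (by simp [hi]) h]
    have horder : analyticOrderAt f (ρ a) = analyticOrderAt g (ρ a) := by
      have hanalytic : AnalyticAt ℂ (fun z ↦ ∏ i ∈ S, (z - ρ i) ^ n i) (ρ a) := by fun_prop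
      rw [show f = (fun z ↦ ∏ i ∈ S, (z - ρ i) ^ n i) * g from funext hfg,
        analyticOrderAt_mul hanalytic (hg.analyticAt _), hanalytic.analyticOrderAt_eq_zero.2 hprod,
        zero_add]
    obtain ⟨k, hk, hgk⟩ := exists_eq_sub_pow_mul_of_le_analyticOrderAt hg
      (horder ▸ hn a (Finset.mem_cons_self a S))
    refine ⟨k, hk, fun z ↦ ?_⟩
    rw [hfg, hgk, Finset.prod_cons]
    ring

lemma norm_neg_conj_sub_mul_I (γ : ℝ) (z : ℂ) : ‖-conj z - γ * I‖ = ‖z - γ * I‖ := by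
  rw [← norm_conj (z - γ * I), ← norm_neg]
  congr 1
  simp only [neg_sub, sub_neg_eq_add, map_sub, map_mul, conj_ofReal, conj_I, mul_neg]
  ring

lemma sub_add_isBigO_sub_sub (ρ : ℂ) (h : ℝ) :
    (fun z : ℂ ↦ z + h - ρ) =O[cobounded ℂ] fun z ↦ z - h - ρ := by
  have htendsto : Tendsto (fun z : ℂ ↦ z - h - ρ) (cobounded ℂ) (cobounded ℂ) :=
    (tendsto_sub_const_cobounded ρ).comp (tendsto_sub_const_cobounded (h : ℂ))
  have hconst : (fun _ : ℂ ↦ (2 * h : ℂ)) =O[cobounded ℂ] fun z ↦ z - h - ρ :=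
    ((isLittleO_const_id_cobounded (2 * h : ℂ)).comp_tendsto htendsto).isBigO
  refine ((isBigO_refl _ _).add hconst).congr_left fun z ↦ ?_
  ring

lemma XiLike.sum_mul_re_inv_le_re_logDeriv (hf : XiLike f) {n : ℝ → ℕ} {S : Finset ℝ}
    (hn : ∀ γ ∈ S, n γ ≤ analyticOrderAt f (γ * I)) (hs : 0 < s.re) :
    ∑ γ ∈ S, n γ * ((s - γ * I)⁻¹).re ≤ (logDeriv f s).re := by
  obtain ⟨g, hg, hfg⟩ := exists_eq_prod_sub_pow_mul_of_le_analyticOrderAt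
    (ρ := fun γ : ℝ ↦ (γ * I : ℂ)) hf.differentiable (fun γ _ γ' _ h ↦ by simpa using h) hn
  have hne : ∀ γ : ℝ, s - γ * I ≠ 0 := fun γ h0 ↦ by
    have h := congrArg re h0
    simp only [sub_re, mul_re, ofReal_re, I_re, ofReal_im, I_im, zero_re] at h
    linarith
  have hXi : XiLike g := by
    refine hf.of_eq_mul hg (fun z ↦ ?_) ?_ (fun h ↦ ?_) hfg
    · simp only [norm_prod, norm_pow, norm_neg_conj_sub_mul_I]
    · simp only [Finset.prod_ne_zero_iff]
      refine (eventually_all_finset S).2 fun γ _ ↦ ?_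
      filter_upwards [eventually_ne_cobounded (γ * I : ℂ)] with z hz
      exact pow_ne_zero _ (sub_ne_zero.2 hz)
    · exact IsBigO.finsetProd fun γ _ ↦ (sub_add_isBigO_sub_sub _ h).pow _
  have hlogDeriv : logDeriv f s = ∑ γ ∈ S, n γ * (s - γ * I)⁻¹ + logDeriv g s := by
    rw [funext hfg, logDeriv_mul s (Finset.prod_ne_zero_iff.2 fun γ _ ↦ pow_ne_zero _ (hne γ))
      (hXi.ne_zero s hs) (by fun_prop) (hg s),
      logDeriv_prod (f := fun (γ : ℝ) z ↦ (z - γ * I) ^ n γ) (fun γ _ ↦ pow_ne_zero _ (hne γ))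
        (fun γ _ ↦ by fun_prop)]
    congr 1
    refine Finset.sum_congr rfl fun γ _ ↦ ?_
    rw [logDeriv_fun_pow (by fun_prop), logDeriv_apply]
    simp
  have hre : (∑ γ ∈ S, n γ * (s - γ * I)⁻¹).re = ∑ γ ∈ S, n γ * ((s - γ * I)⁻¹).re := by
    rw [re_sum]
    exact Finset.sum_congr rfl fun γ _ ↦ by rw [← ofReal_natCast, re_ofReal_mul]
  rw [hlogDeriv, add_re, hre]
  linarith [hXi.re_logDeriv_nonneg hs]

end XiLike

/-! ### The zeros seen from the right of the critical line -/

lemma differentiableAt_Gammaℝ {s : ℂ} (hs : 0 < s.re) : DifferentiableAt ℂ Gammaℝ s := by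
  simpa only [inv_inv] using
    (differentiable_Gammaℝ_inv s).fun_inv (inv_ne_zero (Gammaℝ_ne_zero_of_re_pos hs))

lemma centeredXi_comp_sub_half_eventuallyEq {s : ℂ} (hs : 0 < s.re) :
    centeredXi ∘ (fun s ↦ s - 1 / 2) =ᶠ[nhds s] fun s ↦ s * riemannZeta₁ s * Gammaℝ s := by
  filter_upwards [(isOpen_lt continuous_const continuous_re).mem_nhds hs] with z hz
  exact centeredXi_sub_half hz

lemma analyticAt_riemannZeta {s : ℂ} (hs : s ≠ 1) : AnalyticAt ℂ riemannZeta s :=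
  DifferentiableOn.analyticAt (s := {1}ᶜ)
    (fun _ hz ↦ (differentiableAt_riemannZeta hz).differentiableWithinAt)
    (isOpen_compl_singleton.mem_nhds hs)

lemma analyticAt_Gammaℝ {s : ℂ} (hs : 0 < s.re) : AnalyticAt ℂ Gammaℝ s :=
  DifferentiableOn.analyticAt (s := {s | 0 < s.re})
    (fun _ hz ↦ (differentiableAt_Gammaℝ hz).differentiableWithinAt)
    ((isOpen_lt continuous_const continuous_re).mem_nhds hs)

lemma zetaMult_le_analyticOrderAt_riemannZeta {s : ℂ} (hs : s ≠ 1) :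
    (zetaMult s : ℕ∞) ≤ analyticOrderAt riemannZeta s := by
  rw [natCast_le_analyticOrderAt_iff_iteratedDeriv_eq_zero (analyticAt_riemannZeta hs)]
  intro i hi
  simpa using Nat.notMem_of_lt_sInf hi

lemma analyticOrderAt_riemannZeta_le_centeredXi {s : ℂ} (hs : 0 < s.re) (hs1 : s ≠ 1) :
    analyticOrderAt riemannZeta s ≤ analyticOrderAt centeredXi (s - 1 / 2) := by
  have hfactor : AnalyticAt ℂ (fun s ↦ s * (s - 1) * Gammaℝ s) s := by
    have h := analyticAt_Gammaℝ hs
    fun_prop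
  have heq : centeredXi ∘ (fun s ↦ s - 1 / 2) =ᶠ[nhds s]
      (fun s ↦ s * (s - 1) * Gammaℝ s) * riemannZeta := by
    filter_upwards [centeredXi_comp_sub_half_eventuallyEq hs, eventually_ne_nhds hs1] with z hz hz1
    rw [hz, riemannZeta₁_eq_sub_one_mul hz1, Pi.mul_apply]
    ring
  rw [← analyticOrderAt_comp_of_deriv_ne_zero (g := fun s ↦ s - 1 / 2) (by fun_prop) (by simp),
    analyticOrderAt_congr heq, analyticOrderAt_mul hfactor (analyticAt_riemannZeta hs1)]
  exact le_add_self

lemma ordMult_le_analyticOrderAt_centeredXi (γ : ℝ) :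
    (ordMult γ : ℕ∞) ≤ analyticOrderAt centeredXi (γ * I) := by
  have hne : (1 / 2 + γ * I : ℂ) ≠ 1 := fun h ↦ by simpa using congrArg re h
  have h := (zetaMult_le_analyticOrderAt_riemannZeta hne).trans
    (analyticOrderAt_riemannZeta_le_centeredXi (by simp) hne)
  rwa [add_sub_cancel_left] at h

lemma log_sub_log_le_re_inv {x y h j : ℝ} (hx : 0 < x) (hh : 0 < h) (hxh : x + h ≤ 1)
    (hj : 0 ≤ j) :
    1 / 2 * Real.log ((j + 1 + 1) ^ 2 + y ^ 2) - 1 / 2 * Real.log ((j + 1) ^ 2 + y ^ 2) -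
      3 / 2 * ((j + 1) ^ 2)⁻¹ ≤ (x + j) / ((x + h + j) ^ 2 + y ^ 2) := by
  set D := (j + 1) ^ 2 + y ^ 2 with hD
  have hDpos : 0 < D := by positivity
  have hterm : j / D ≤ (x + j) / ((x + h + j) ^ 2 + y ^ 2) := by
    have hsq : (x + h + j) ^ 2 ≤ (j + 1) ^ 2 := by
      exact pow_le_pow_left₀ (by positivity) (by linarith) 2
    exact div_le_div₀ (by positivity) (by linarith) (by positivity) (by linarith)
  have hlog : Real.log ((j + 1 + 1) ^ 2 + y ^ 2) - Real.log D ≤ 2 * (j / D) + 3 / D := by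
    rw [← Real.log_div (by positivity) hDpos.ne']
    refine (Real.log_le_sub_one_of_pos (by positivity)).trans_eq ?_
    rw [div_sub_one hDpos.ne', hD]
    ring
  have hinv : 3 / D ≤ 3 * ((j + 1) ^ 2)⁻¹ := by
    rw [← div_eq_mul_inv, hD]
    gcongr
    exact le_add_of_nonneg_right (sq_nonneg y)
  linarith

lemma sum_range_inv_add_one_sq_le_two (n : ℕ) :
    ∑ j ∈ Finset.range n, (((j : ℝ) + 1) ^ 2)⁻¹ ≤ 2 := by
  have h := sum_Ioo_inv_sq_le (α := ℝ) 0 (n + 1)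
  have hIoo : Finset.Ioo 0 (n + 1) = Finset.Ico (0 + 1) (n + 1) := rfl
  rw [hIoo, ← Finset.sum_Ico_add' (fun i : ℕ ↦ ((i : ℝ) ^ 2)⁻¹), ← Finset.range_eq_Ico] at h
  simpa using h

lemma log_sub_le_sum_re_inv {x y h : ℝ} (hx : 0 < x) (hh : 0 < h) (hxh : x + h ≤ 1) {n : ℕ}
    (hn : n ≠ 0) :
    Real.log n - (3 + 1 / 2 * Real.log (1 + y ^ 2)) ≤
      ∑ j ∈ Finset.range (n + 1), (x + j) / ((x + h + j) ^ 2 + y ^ 2) := by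
  have hsum := Finset.sum_le_sum fun (j : ℕ) (_ : j ∈ Finset.range (n + 1)) ↦
    log_sub_log_le_re_inv (y := y) hx hh hxh j.cast_nonneg
  have htelescope := Finset.sum_range_sub
    (fun j : ℕ ↦ 1 / 2 * Real.log (((j : ℝ) + 1) ^ 2 + y ^ 2)) (n + 1)
  simp only [Nat.cast_add, Nat.cast_one, Nat.cast_zero, zero_add, one_pow] at htelescope
  rw [Finset.sum_sub_distrib, htelescope, ← Finset.mul_sum] at hsum
  have hlog : 2 * Real.log n ≤ Real.log (((n : ℝ) + 1 + 1) ^ 2 + y ^ 2) := by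
    have hpos : (0 : ℝ) < n := by positivity
    rw [← Real.log_rpow hpos, Real.rpow_two]
    refine Real.log_le_log (by positivity) ?_
    nlinarith [sq_nonneg y]
  linarith [sum_range_inv_add_one_sq_le_two (n + 1)]

lemma norm_le_norm_add_mul_exp {w : ℂ} {h : ℝ} (hw : 0 < w.re) (hh : 0 < h) :
    ‖w‖ ≤ ‖w + h‖ * Real.exp (-(h * (w.re / ((w.re + h) ^ 2 + w.im ^ 2)))) := by
  set D := (w.re + h) ^ 2 + w.im ^ 2 with hD
  have hDpos : 0 < D := by positivity
  have hnorm : ‖w‖ ^ 2 = w.re ^ 2 + w.im ^ 2 := by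
    rw [Complex.sq_norm, normSq_apply]
    ring
  have hnorm_add : ‖w + h‖ ^ 2 = D := by
    rw [Complex.sq_norm, normSq_apply, hD]
    simp only [add_re, ofReal_re, add_im, ofReal_im, add_zero]
    ring
  rw [← sq_le_sq₀ (norm_nonneg _) (by positivity), mul_pow, hnorm, hnorm_add, ← Real.exp_nat_mul]
  calc w.re ^ 2 + w.im ^ 2
    _ ≤ D - 2 * h * w.re := by
      rw [hD]
      nlinarith
    _ = D * ((2 : ℕ) * -(h * (w.re / D)) + 1) := by
      push_cast
      field_simp
      ring
    _ ≤ _ := by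
      gcongr
      exact Real.add_one_le_exp _

lemma prod_norm_add_le_mul_exp {u : ℂ} {h : ℝ} (hu : 0 < u.re) (hh : 0 < h)
    (huh : u.re + h ≤ 1) {n : ℕ} (hn : n ≠ 0) :
    Real.exp (Real.log n * h) * ∏ j ∈ Finset.range (n + 1), ‖u + j‖ ≤
      (∏ j ∈ Finset.range (n + 1), ‖u + h + j‖) *
        Real.exp ((3 + 1 / 2 * Real.log (1 + u.im ^ 2)) * h) := by
  set S := ∑ j ∈ Finset.range (n + 1), (u.re + j) / ((u.re + h + j) ^ 2 + u.im ^ 2) with hS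
  have hprod : ∏ j ∈ Finset.range (n + 1), ‖u + j‖ ≤
      (∏ j ∈ Finset.range (n + 1), ‖u + h + j‖) * Real.exp (-(h * S)) := by
    rw [hS, Finset.mul_sum, ← Finset.sum_neg_distrib, Real.exp_sum, ← Finset.prod_mul_distrib]
    refine Finset.prod_le_prod (fun _ _ ↦ norm_nonneg _) fun j _ ↦ ?_
    have hj := norm_le_norm_add_mul_exp (w := u + j)
      (by simp only [add_re, natCast_re]; positivity) hh
    simpa [add_right_comm] using hj
  have hlog : Real.log n - (3 + 1 / 2 * Real.log (1 + u.im ^ 2)) ≤ S :=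
    log_sub_le_sum_re_inv hu hh huh hn
  calc _ ≤ Real.exp (Real.log n * h) *
        ((∏ j ∈ Finset.range (n + 1), ‖u + h + j‖) * Real.exp (-(h * S))) := by gcongr
    _ = (∏ j ∈ Finset.range (n + 1), ‖u + h + j‖) * Real.exp (Real.log n * h - h * S) := by
      rw [sub_eq_add_neg, Real.exp_add]
      ring
    _ ≤ _ := by
      gcongr
      nlinarith

lemma norm_GammaSeq_eq (u : ℂ) {n : ℕ} (hn : n ≠ 0) :
    ‖GammaSeq u n‖ = (n : ℝ) ^ u.re * n.factorial / ∏ j ∈ Finset.range (n + 1), ‖u + j‖ := by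
  have hpos : (0 : ℝ) < n := by positivity
  rw [GammaSeq, norm_div, norm_mul, norm_prod, ← ofReal_natCast n, norm_cpow_eq_rpow_re_of_pos hpos,
    norm_natCast]

lemma norm_Gamma_add_le_mul_exp {u : ℂ} {h : ℝ} (hu : 0 < u.re) (hh : 0 < h)
    (huh : u.re + h ≤ 1) :
    ‖Gamma (u + h)‖ ≤ ‖Gamma u‖ * Real.exp ((3 + 1 / 2 * Real.log (1 + u.im ^ 2)) * h) := by
  refine le_of_tendsto_of_tendsto (GammaSeq_tendsto_Gamma (u + h)).norm
    ((GammaSeq_tendsto_Gamma u).norm.mul_const _) ?_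
  filter_upwards [eventually_ge_atTop 1] with n hn
  have hn0 : n ≠ 0 := by lia
  have hpos : (0 : ℝ) < n := by positivity
  have hprod_pos : ∀ {w : ℂ}, 0 < w.re → 0 < ∏ j ∈ Finset.range (n + 1), ‖w + j‖ := fun hw ↦
    Finset.prod_pos fun j _ ↦ norm_pos_iff.2 fun h0 ↦ by
      have h := congrArg re h0
      simp only [add_re, natCast_re, zero_re] at h
      linarith [j.cast_nonneg (α := ℝ)]
  rw [norm_GammaSeq_eq _ hn0, norm_GammaSeq_eq _ hn0, add_re, ofReal_re, Real.rpow_add hpos,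
    Real.rpow_def_of_pos hpos h, div_mul_eq_mul_div,
    div_le_div_iff₀ (hprod_pos (by rw [add_re, ofReal_re]; linarith)) (hprod_pos hu)]
  have h := mul_le_mul_of_nonneg_left (prod_norm_add_le_mul_exp hu hh huh hn0)
    (show 0 ≤ (n : ℝ) ^ u.re * n.factorial by positivity)
  linarith

lemma differentiableAt_Gamma_of_re_pos {s : ℂ} (hs : 0 < s.re) : DifferentiableAt ℂ Gamma s :=
  differentiableAt_Gamma s fun m hm ↦ by
    have h := congrArg re hm
    simp only [neg_re, natCast_re] at h
    linarith [m.cast_nonneg (α := ℝ)]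

lemma re_digamma_le {u : ℂ} (hu : 0 < u.re) (hu' : u.re < 1) :
    (digamma u).re ≤ 3 + 1 / 2 * Real.log (1 + u.im ^ 2) := by
  refine re_logDeriv_le_of_norm_add_le_mul_exp (differentiableAt_Gamma_of_re_pos hu)
    (Gamma_ne_zero_of_re_pos hu) ?_
  filter_upwards [Ioo_mem_nhdsGT (sub_pos.2 hu')] with x hx
  exact norm_Gamma_add_le_mul_exp hu hx.1 (by linarith [hx.2])

lemma logDeriv_Gammaℝ {s : ℂ} (hs : 0 < s.re) :
    logDeriv Gammaℝ s = (digamma (s / 2) - Real.log π) / 2 := by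
  have hre : 0 < (s / 2).re := by simpa using hs
  have hpi : (π : ℂ) ≠ 0 := by simp [Real.pi_ne_zero]
  have hGamma : DifferentiableAt ℂ (fun z ↦ Gamma (z / 2)) s :=
    (differentiableAt_Gamma_of_re_pos hre).comp s (by fun_prop)
  have hcpow : HasDerivAt (fun z : ℂ ↦ (π : ℂ) ^ (-z / 2))
      ((π : ℂ) ^ (-s / 2) * Complex.log π * (-1 / 2)) s :=
    ((hasDerivAt_id' s).neg.div_const 2).const_cpow (Or.inl hpi)
  have hcpow_ne : (π : ℂ) ^ (-s / 2) ≠ 0 := by simp [cpow_eq_zero_iff, hpi]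
  have hcomp : logDeriv (fun z ↦ Gamma (z / 2)) s = digamma (s / 2) * (1 / 2) := by
    rw [show (fun z ↦ Gamma (z / 2)) = Gamma ∘ fun z ↦ z / 2 from rfl,
      logDeriv_comp (g := fun z ↦ z / 2) (differentiableAt_Gamma_of_re_pos hre) (by fun_prop),
      digamma]
    simp
  rw [funext Gammaℝ_def, logDeriv_mul (g := fun z ↦ Gamma (z / 2)) s hcpow_ne
    (Gamma_ne_zero_of_re_pos hre) hcpow.differentiableAt hGamma, hcomp, logDeriv_apply, hcpow.deriv,
    ← ofReal_log Real.pi_pos.le]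
  field_simp
  ring

lemma re_logDeriv_Gammaℝ_le {s : ℂ} (hs : 0 < s.re) (hs' : s.re < 2) :
    (logDeriv Gammaℝ s).re ≤ 4 * logHeight s.im := by
  have hdigamma := re_digamma_le (u := s / 2) (by simpa using hs) (by rw [div_ofNat_re]; linarith)
  have hlog : Real.log (1 + (s / 2).im ^ 2) ≤ 2 * logHeight s.im := by
    rw [logHeight, ← Real.log_rpow (by positivity), Real.rpow_two]
    refine Real.log_le_log (by positivity) ?_
    rw [div_ofNat_im]
    nlinarith [sq_abs s.im, abs_nonneg s.im]
  have hpi : 0 ≤ Real.log π := Real.log_nonneg (by linarith [Real.pi_gt_three])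
  rw [logDeriv_Gammaℝ hs, div_ofNat_re, sub_re, ofReal_re]
  linarith [one_le_logHeight s.im]

lemma logDeriv_centeredXi_sub_half (hRH : RiemannHypothesis) {s : ℂ} (hs : 1 / 2 < s.re) :
    logDeriv centeredXi (s - 1 / 2) = s⁻¹ + logDeriv riemannZeta₁ s + logDeriv Gammaℝ s := by
  have hs0 : s ≠ 0 := by
    rintro rfl
    norm_num at hs
  have hζ := riemannZeta₁_ne_zero_of_half_lt_re hRH hs
  have hζ_diff : DifferentiableAt ℂ riemannZeta₁ s := differentiable_riemannZeta₁ s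
  have hGamma := differentiableAt_Gammaℝ (s := s) (by linarith)
  have hcomp : logDeriv (centeredXi ∘ fun s ↦ s - 1 / 2) s = logDeriv centeredXi (s - 1 / 2) := by
    rw [logDeriv_comp (differentiable_centeredXi _) (by fun_prop)]
    simp
  have hcongr := logDeriv_congr_nhds (centeredXi_comp_sub_half_eventuallyEq (s := s) (by linarith))
  rw [← hcomp, hcongr.eq_of_nhds, logDeriv_mul (f := fun s ↦ s * riemannZeta₁ s) s
      (mul_ne_zero hs0 hζ) (Gammaℝ_ne_zero_of_re_pos (by linarith)) (by fun_prop) hGamma,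
    logDeriv_mul (f := fun s ↦ s) s hs0 hζ (by fun_prop) hζ_diff, logDeriv_apply]
  simp

lemma sum_ordMult_mul_div_le (hRH : RiemannHypothesis) (S : Finset ℝ) {s : ℂ}
    (hs : 1 / 2 < s.re) (hs' : s.re < 2) :
    ∑ γ ∈ S, ordMult γ * ((s.re - 1 / 2) / ((s.re - 1 / 2) ^ 2 + (s.im - γ) ^ 2)) ≤
      (logDeriv riemannZeta₁ s).re + 6 * logHeight s.im := by
  have hsum := (xiLike_centeredXi hRH).sum_mul_re_inv_le_re_logDeriv (S := S) (s := s - 1 / 2)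
    (fun γ _ ↦ ordMult_le_analyticOrderAt_centeredXi γ) (by simpa using hs)
  have hinv : (s⁻¹).re ≤ 2 := by
    refine (re_le_norm _).trans ?_
    rw [norm_inv]
    exact inv_le_of_inv_le₀ (by norm_num) (by linarith [re_le_norm s])
  rw [logDeriv_centeredXi_sub_half hRH hs, add_re, add_re] at hsum
  calc ∑ γ ∈ S, ordMult γ * ((s.re - 1 / 2) / ((s.re - 1 / 2) ^ 2 + (s.im - γ) ^ 2))
    _ = ∑ γ ∈ S, ordMult γ * ((s - 1 / 2 - γ * I)⁻¹).re := by
      refine Finset.sum_congr rfl fun γ _ ↦ ?_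
      rw [inv_re, normSq_apply]
      simp [sq]
    _ ≤ _ := by
      linarith [re_logDeriv_Gammaℝ_le (s := s) (by linarith) hs', one_le_logHeight s.im]

/-! ### The Jackson kernel and contour shifts -/

lemma integrable_of_norm_le_div_one_add_sq {f : ℝ → ℂ} {B : ℝ} (hf : Continuous f)
    (hB : ∀ y, ‖f y‖ ≤ B / (1 + y ^ 2)) : Integrable f := by
  have hdom : Integrable fun y : ℝ ↦ B / (1 + y ^ 2) := by
    simpa only [div_eq_mul_inv] using integrable_inv_one_add_sq.const_mul B
  exact hdom.mono' hf.aestronglyMeasurable (ae_of_all _ hB)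

section ContourShift

variable {G : ℂ → ℂ} {α β B : ℝ}

lemma continuous_vertical_line (hG : ∀ s : ℂ, s.re = α → DifferentiableAt ℂ G s) :
    Continuous fun y : ℝ ↦ G (α + y * I) := by
  refine continuous_iff_continuousAt.2 fun y ↦ ?_
  exact (hG _ (by simp)).continuousAt.comp (f := fun y : ℝ ↦ (α + y * I : ℂ)) (by fun_prop)

lemma norm_intervalIntegral_vertical_sub_le (hαβ : α ≤ β)
    (hG : ∀ s : ℂ, α ≤ s.re → s.re ≤ β → DifferentiableAt ℂ G s)
    (hB : ∀ x y : ℝ, α ≤ x → x ≤ β → ‖G (x + y * I)‖ ≤ B / (1 + y ^ 2)) (R : ℝ) :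
    ‖(∫ y in (-R)..R, G (α + y * I)) - ∫ y in (-R)..R, G (β + y * I)‖ ≤
      2 * (β - α) * B / (1 + R ^ 2) := by
  have hhorizontal : ∀ y : ℝ, ‖∫ x in α..β, G (x + y * I)‖ ≤ B / (1 + y ^ 2) * (β - α) := by
    intro y
    rw [← abs_of_nonneg (sub_nonneg.2 hαβ)]
    refine intervalIntegral.norm_integral_le_of_norm_le_const fun x hx ↦ ?_
    rw [Set.uIoc_of_le hαβ] at hx
    exact hB x y hx.1.le hx.2
  have hrect := integral_boundary_rect_eq_zero_of_differentiableOn G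
    (α + (-R : ℝ) * I) (β + R * I) fun s hs ↦ by
      have hre := (mem_reProdIm.1 hs).1
      simp only [add_re, mul_re, ofReal_re, ofReal_im, I_re, I_im, mul_zero, mul_one, sub_zero,
        add_zero, Set.uIcc_of_le hαβ] at hre
      exact (hG s hre.1 hre.2).differentiableWithinAt
  simp only [add_re, add_im, mul_re, mul_im, ofReal_re, ofReal_im, I_re, I_im, mul_zero, mul_one,
    sub_zero, add_zero, zero_add, smul_eq_mul] at hrect
  have hsides : I * ((∫ y in (-R)..R, G (α + y * I)) - ∫ y in (-R)..R, G (β + y * I)) =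
      (∫ x in α..β, G (x + (-R : ℝ) * I)) - ∫ x in α..β, G (x + R * I) := by
    linear_combination -hrect
  calc _ = ‖(∫ x in α..β, G (x + (-R : ℝ) * I)) - ∫ x in α..β, G (x + R * I)‖ := by
        rw [← hsides, norm_mul, norm_I, one_mul]
    _ ≤ B / (1 + (-R) ^ 2) * (β - α) + B / (1 + R ^ 2) * (β - α) :=
        (norm_sub_le _ _).trans (add_le_add (hhorizontal _) (hhorizontal _))
    _ = _ := by ring

lemma integral_vertical_eq (hαβ : α ≤ β)
    (hG : ∀ s : ℂ, α ≤ s.re → s.re ≤ β → DifferentiableAt ℂ G s)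
    (hB : ∀ x y : ℝ, α ≤ x → x ≤ β → ‖G (x + y * I)‖ ≤ B / (1 + y ^ 2)) :
    ∫ y : ℝ, G (α + y * I) = ∫ y : ℝ, G (β + y * I) := by
  have hintegrable : ∀ x : ℝ, α ≤ x → x ≤ β → Integrable fun y : ℝ ↦ G (x + y * I) :=
    fun x hαx hxβ ↦ integrable_of_norm_le_div_one_add_sq
      (continuous_vertical_line fun s hs ↦ hG s (hs ▸ hαx) (hs ▸ hxβ)) fun y ↦ hB x y hαx hxβ
  have hlim := fun x hαx hxβ ↦ intervalIntegral_tendsto_integral (hintegrable x hαx hxβ)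
    tendsto_neg_atTop_atBot tendsto_id
  have hdecay : Tendsto (fun R : ℝ ↦ 2 * (β - α) * B / (1 + R ^ 2)) atTop (nhds 0) :=
    tendsto_const_nhds.div_atTop
      (tendsto_atTop_add_const_left _ _ (tendsto_pow_atTop two_ne_zero))
  exact sub_eq_zero.1 (tendsto_nhds_unique ((hlim α le_rfl hαβ).sub (hlim β hαβ le_rfl))
    (squeeze_zero_norm (norm_intervalIntegral_vertical_sub_le hαβ hG hB) hdecay))

end ContourShift

/-- The entire function `sinh z / z`. -/
def sinhc : ℂ → ℂ := dslope sinh 0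

lemma differentiable_sinhc : Differentiable ℂ sinhc := by
  rw [sinhc, ← differentiableOn_univ, differentiableOn_dslope univ_mem]
  exact differentiable_sinh.differentiableOn

lemma mul_sinhc (z : ℂ) : z * sinhc z = sinh z := by
  simpa [sinhc] using sub_smul_dslope sinh 0 z

lemma sinhc_zero : sinhc 0 = 1 := by simp [sinhc, Complex.deriv_sinh]

lemma exp_re_add_exp_neg_re_le (z : ℂ) : (‖exp z‖ + ‖exp (-z)‖) / 2 ≤ Real.exp |z.re| := by
  have hpos : Real.exp z.re ≤ Real.exp |z.re| := Real.exp_le_exp.2 (le_abs_self _)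
  have hneg : Real.exp (-z.re) ≤ Real.exp |z.re| := Real.exp_le_exp.2 (neg_le_abs _)
  rw [norm_exp, norm_exp, neg_re]
  linarith

lemma norm_sinh_le_exp_abs_re (z : ℂ) : ‖sinh z‖ ≤ Real.exp |z.re| := by
  refine le_trans ?_ (exp_re_add_exp_neg_re_le z)
  rw [sinh, norm_div, norm_ofNat]
  gcongr
  exact norm_sub_le _ _

lemma norm_cosh_le_exp_abs_re (z : ℂ) : ‖cosh z‖ ≤ Real.exp |z.re| := by
  refine le_trans ?_ (exp_re_add_exp_neg_re_le z)
  rw [cosh, norm_div, norm_ofNat]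
  gcongr
  exact norm_add_le _ _

lemma norm_sinhc_le_exp_abs_re (z : ℂ) : ‖sinhc z‖ ≤ Real.exp |z.re| := by
  rcases eq_or_ne z 0 with rfl | hz
  · simp [sinhc_zero]
  have hconvex : Convex ℝ {w : ℂ | |w.re| ≤ |z.re|} := by
    have hpreimage : {w : ℂ | |w.re| ≤ |z.re|} = reLm ⁻¹' Set.Icc (-|z.re|) |z.re| := by
      ext w
      simp [abs_le]
    rw [hpreimage]
    exact (convex_Icc _ _).linear_preimage _
  have hmvt := hconvex.norm_image_sub_le_of_norm_deriv_le (f := sinh) (C := Real.exp |z.re|)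
    (x := 0) (y := z) (fun w _ ↦ differentiable_sinh w)
    (fun w hw ↦ by
      rw [Complex.deriv_sinh]
      exact (norm_cosh_le_exp_abs_re w).trans (Real.exp_le_exp.2 hw)) (by simp) (by simp)
  rw [← mul_sinhc z, sinh_zero, sub_zero, sub_zero, norm_mul, mul_comm] at hmvt
  exact le_of_mul_le_mul_right hmvt (norm_pos_iff.2 hz)

lemma sinhc_ofReal_mul_I (y : ℝ) : sinhc (y * I) = Real.sinc y := by
  rcases eq_or_ne y 0 with rfl | hy
  · simp [sinhc_zero]
  have hmul := mul_sinhc (y * I)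
  have hy' : (y : ℂ) ≠ 0 := ofReal_ne_zero.2 hy
  rw [sinh_mul_I, mul_right_comm] at hmul
  rw [Real.sinc_of_ne_zero hy, ofReal_div, ofReal_sin, eq_div_iff hy', mul_comm]
  exact mul_right_cancel₀ I_ne_zero hmul

/-- The entire extension of the Jackson kernel `y ↦ (sin (a y) / (a y)) ^ 4`, which lives on the
imaginary axis: it is nonnegative there, and its Fourier transform is supported in `[-4a, 4a]`. -/
def jacksonKernel (a : ℝ) (w : ℂ) : ℂ := sinhc (a * w) ^ 4

lemma differentiable_jacksonKernel (a : ℝ) : Differentiable ℂ (jacksonKernel a) := by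
  have h := differentiable_sinhc
  unfold jacksonKernel
  fun_prop

lemma jacksonKernel_ofReal_mul_I (a y : ℝ) :
    jacksonKernel a (y * I) = (Real.sinc (a * y) ^ 4 : ℝ) := by
  rw [jacksonKernel, ← mul_assoc, ← ofReal_mul, sinhc_ofReal_mul_I, ofReal_pow]

lemma norm_jacksonKernel_mul_le {a : ℝ} (ha : 0 < a) (w : ℂ) :
    ‖jacksonKernel a w‖ * (1 + a ^ 2 * ‖w‖ ^ 2) ^ 2 ≤ 4 * Real.exp (4 * a * |w.re|) := by
  have hre : |(a * w).re| = a * |w.re| := by rw [re_ofReal_mul, abs_mul, abs_of_pos ha]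
  have hnorm : ‖a * w‖ = a * ‖w‖ := by rw [norm_mul, norm_real, Real.norm_of_nonneg ha.le]
  set E := Real.exp (a * |w.re|) with hE
  set v := ‖sinhc (a * w)‖
  have hv_le : v ≤ E := by simpa only [hre] using norm_sinhc_le_exp_abs_re (a * w)
  have hmul_le : a * ‖w‖ * v ≤ E := by
    simpa only [← mul_sinhc, norm_mul (a * w), hre, hnorm] using norm_sinh_le_exp_abs_re (a * w)
  have hsq : v ^ 2 * (1 + a ^ 2 * ‖w‖ ^ 2) ≤ 2 * E ^ 2 := by
    have hv_sq : v ^ 2 ≤ E ^ 2 := by gcongr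
    have hmul_sq : (a * ‖w‖ * v) ^ 2 ≤ E ^ 2 := by gcongr
    nlinarith
  calc ‖jacksonKernel a w‖ * (1 + a ^ 2 * ‖w‖ ^ 2) ^ 2
    _ = (v ^ 2 * (1 + a ^ 2 * ‖w‖ ^ 2)) ^ 2 := by
      rw [jacksonKernel, norm_pow]
      ring
    _ ≤ (2 * E ^ 2) ^ 2 := by gcongr
    _ = 4 * Real.exp (4 * a * |w.re|) := by
      rw [mul_pow, ← pow_mul, hE, ← Real.exp_nat_mul]
      push_cast
      ring_nf

lemma norm_ofReal_add_mul_I_sq (x y : ℝ) : ‖(x + y * I : ℂ)‖ ^ 2 = x ^ 2 + y ^ 2 := by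
  rw [Complex.sq_norm, normSq_add_mul_I]

lemma norm_jacksonKernel_le {a : ℝ} (ha : 1 / 8 ≤ a) (x y : ℝ) :
    ‖jacksonKernel a (x + y * I)‖ ≤ 16384 * Real.exp (4 * a * |x|) / (1 + y ^ 2) ^ 2 := by
  have hbound := norm_jacksonKernel_mul_le (by linarith) (x + y * I)
  rw [norm_ofReal_add_mul_I_sq, show (x + y * I : ℂ).re = x by simp] at hbound
  have hweight : 1 + y ^ 2 ≤ 64 * (1 + a ^ 2 * (x ^ 2 + y ^ 2)) := by
    have ha_sq : 1 / 64 ≤ a ^ 2 := by nlinarith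
    nlinarith [sq_nonneg x, sq_nonneg y]
  rw [le_div_iff₀ (by positivity)]
  calc ‖jacksonKernel a (x + y * I)‖ * (1 + y ^ 2) ^ 2
    _ ≤ ‖jacksonKernel a (x + y * I)‖ * (64 * (1 + a ^ 2 * (x ^ 2 + y ^ 2))) ^ 2 := by gcongr
    _ = 4096 * (‖jacksonKernel a (x + y * I)‖ * (1 + a ^ 2 * (x ^ 2 + y ^ 2)) ^ 2) := by ring
    _ ≤ 4096 * (4 * Real.exp (4 * a * |x|)) := by gcongr
    _ = _ := by ring

lemma half_le_sinc_pow_four {x : ℝ} (hx : |x| ≤ 1 / 32) : 1 / 2 ≤ Real.sinc x ^ 4 := by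
  have hsinc : 7 / 8 ≤ Real.sinc |x| := by
    rcases eq_or_ne x 0 with rfl | hx0
    · norm_num
    have hpos : 0 < |x| := abs_pos.2 hx0
    rw [Real.sinc_of_ne_zero hpos.ne', le_div_iff₀ hpos]
    have hcube : |x| * |x| ^ 2 ≤ |x| * (1 / 32) ^ 2 := by gcongr
    nlinarith [Real.sin_gt_sub_cube hpos]
  have heven : Real.sinc |x| = Real.sinc x := by
    rcases abs_choice x with h | h <;> simp [h, Real.sinc_neg]
  calc (1 : ℝ) / 2 ≤ (7 / 8) ^ 4 := by norm_num
    _ ≤ Real.sinc x ^ 4 := by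
      rw [← heven]
      gcongr

lemma sinc_pow_four_mul_le {a : ℝ} (ha : 1 / 8 ≤ a) (y : ℝ) :
    Real.sinc (a * y) ^ 4 * (1 + |y|) ≤ 36 * (1 + (a * y) ^ 2)⁻¹ := by
  have ha0 : 0 < a := by linarith
  have hsinc : Real.sinc (a * y) ^ 4 * (1 + (a * y) ^ 2) ^ 2 ≤ 4 := by
    have h := norm_jacksonKernel_mul_le ha0 (y * I)
    rw [jacksonKernel_ofReal_mul_I, norm_real, Real.norm_of_nonneg (by positivity)] at h
    simpa [mul_pow] using h
  have hweight : 1 + |y| ≤ 9 * (1 + (a * y) ^ 2) := by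
    have habs : |y| ≤ 8 * |a * y| := by
      rw [abs_mul, abs_of_pos ha0]
      nlinarith [abs_nonneg y]
    nlinarith [sq_abs (a * y), sq_nonneg (|a * y| - 1)]
  rw [← div_eq_mul_inv, le_div_iff₀ (by positivity)]
  calc Real.sinc (a * y) ^ 4 * (1 + |y|) * (1 + (a * y) ^ 2)
    _ ≤ Real.sinc (a * y) ^ 4 * (9 * (1 + (a * y) ^ 2)) * (1 + (a * y) ^ 2) := by gcongr
    _ = 9 * (Real.sinc (a * y) ^ 4 * (1 + (a * y) ^ 2) ^ 2) := by ring
    _ ≤ 36 := by linarith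

lemma integrable_inv_one_add_mul_sq {a : ℝ} (ha : a ≠ 0) :
    Integrable fun y : ℝ ↦ (1 + (a * y) ^ 2)⁻¹ :=
  integrable_inv_one_add_sq.comp_mul_left' ha

lemma integral_inv_one_add_mul_sq {a : ℝ} (ha : 0 < a) :
    ∫ y : ℝ, (1 + (a * y) ^ 2)⁻¹ = π / a := by
  rw [Measure.integral_comp_mul_left (fun y : ℝ ↦ (1 + y ^ 2)⁻¹) a, integral_univ_inv_one_add_sq,
    abs_of_pos (inv_pos.2 ha), smul_eq_mul, inv_mul_eq_div]

lemma integrable_sinc_pow_four_mul {a : ℝ} (ha : 1 / 8 ≤ a) :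
    Integrable fun y ↦ Real.sinc (a * y) ^ 4 * (1 + |y|) := by
  refine ((integrable_inv_one_add_mul_sq (a := a) (by linarith)).const_mul 36).mono' ?_
    (ae_of_all _ fun y ↦ ?_)
  · exact Continuous.aestronglyMeasurable (by fun_prop)
  · rw [Real.norm_of_nonneg (by positivity)]
    exact sinc_pow_four_mul_le ha y

lemma integral_sinc_pow_four_mul_le {a : ℝ} (ha : 1 / 8 ≤ a) :
    ∫ y, Real.sinc (a * y) ^ 4 * (1 + |y|) ≤ 36 * (π / a) := by
  have ha0 : 0 < a := by linarith
  rw [← integral_inv_one_add_mul_sq ha0, ← integral_const_mul]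
  exact integral_mono (integrable_sinc_pow_four_mul ha)
    ((integrable_inv_one_add_mul_sq ha0.ne').const_mul 36) (sinc_pow_four_mul_le ha)

/-- The integral of `F` against `jacksonKernel a` along the line `Re s = β`. -/
def kernelIntegral (a β : ℝ) (F : ℂ → ℂ) : ℂ :=
  ∫ y : ℝ, F (β + y * I) * jacksonKernel a (β + y * I)

section KernelIntegral

variable {F : ℂ → ℂ} {a α β C : ℝ}

lemma norm_mul_jacksonKernel_le (ha : 1 / 8 ≤ a) {x y : ℝ}
    (hF : ‖F (x + y * I)‖ ≤ C * (1 + |y|)) :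
    ‖F (x + y * I) * jacksonKernel a (x + y * I)‖ ≤
      32768 * C * Real.exp (4 * a * |x|) / (1 + y ^ 2) := by
  have hC : 0 ≤ C := nonneg_of_mul_nonneg_left ((norm_nonneg _).trans hF) (by positivity)
  have hy : 1 + |y| ≤ 2 * (1 + y ^ 2) := by nlinarith [sq_abs y, sq_nonneg (|y| - 1)]
  rw [norm_mul]
  calc ‖F (x + y * I)‖ * ‖jacksonKernel a (x + y * I)‖
    _ ≤ C * (2 * (1 + y ^ 2)) * (16384 * Real.exp (4 * a * |x|) / (1 + y ^ 2) ^ 2) := by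
      gcongr
      · exact hF.trans (by gcongr)
      · exact norm_jacksonKernel_le ha x y
    _ = _ := by
      field_simp
      ring

lemma integrable_mul_jacksonKernel (ha : 1 / 8 ≤ a) (hF : Continuous fun y : ℝ ↦ F (β + y * I))
    (hC : ∀ y : ℝ, ‖F (β + y * I)‖ ≤ C * (1 + |y|)) :
    Integrable fun y : ℝ ↦ F (β + y * I) * jacksonKernel a (β + y * I) := by
  have hK := (differentiable_jacksonKernel a).continuous
  exact integrable_of_norm_le_div_one_add_sq (hF.mul (hK.comp (by fun_prop))) fun y ↦
    norm_mul_jacksonKernel_le ha (hC y)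

lemma norm_kernelIntegral_le (ha : 1 / 8 ≤ a) (hC : ∀ y : ℝ, ‖F (β + y * I)‖ ≤ C * (1 + |y|)) :
    ‖kernelIntegral a β F‖ ≤ 32768 * C * Real.exp (4 * a * |β|) * π := by
  rw [← integral_univ_inv_one_add_sq, ← integral_const_mul]
  exact norm_integral_le_of_norm_le (integrable_inv_one_add_sq.const_mul _) <|
    ae_of_all _ fun y ↦ norm_mul_jacksonKernel_le ha (hC y)

lemma kernelIntegral_eq_of_le (ha : 1 / 8 ≤ a) (hαβ : α ≤ β)
    (hF : ∀ s : ℂ, α ≤ s.re → s.re ≤ β → DifferentiableAt ℂ F s)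
    (hC : ∀ s : ℂ, α ≤ s.re → s.re ≤ β → ‖F s‖ ≤ C * (1 + |s.im|)) :
    kernelIntegral a α F = kernelIntegral a β F := by
  refine integral_vertical_eq (G := fun s ↦ F s * jacksonKernel a s)
    (B := 32768 * C * Real.exp (4 * a * max |α| |β|)) hαβ
    (fun s hα hβ ↦ (hF s hα hβ).mul (differentiable_jacksonKernel a s)) fun x y hx hx' ↦ ?_
  have hFxy : ‖F (x + y * I)‖ ≤ C * (1 + |y|) := by simpa using hC (x + y * I) (by simpa) (by simpa)
  have hC0 : 0 ≤ C := nonneg_of_mul_nonneg_left ((norm_nonneg _).trans hFxy) (by positivity)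
  refine (norm_mul_jacksonKernel_le ha hFxy).trans ?_
  gcongr
  exact abs_le_max_abs_abs hx hx'

end KernelIntegral

/-! ### The smoothed explicit formula -/

/-- The Mellin-type weight which integration against `jacksonKernel a` attaches to the `n`-th term
of a Dirichlet series. It vanishes once `4 * a ≤ log n`, so that smoothing truncates the series. -/
def kernelWeight (a : ℝ) (n : ℕ) : ℂ := kernelIntegral a 0 fun s ↦ (n : ℂ) ^ (-s)

section KernelWeight

variable {a β : ℝ} {n : ℕ}

lemma norm_kernelWeight_le (ha : 1 / 8 ≤ a) (hn : n ≠ 0) : ‖kernelWeight a n‖ ≤ 36 * (π / a) := by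
  refine le_trans (norm_integral_le_of_norm_le (integrable_sinc_pow_four_mul ha) ?_)
    (integral_sinc_pow_four_mul_le ha)
  refine ae_of_all _ fun y ↦ ?_
  have hsinc : 0 ≤ Real.sinc (a * y) ^ 4 := by positivity
  rw [ofReal_zero, zero_add, norm_mul, norm_natCast_cpow_of_pos hn.bot_lt,
    jacksonKernel_ofReal_mul_I, norm_real, Real.norm_of_nonneg hsinc]
  simpa using le_mul_of_one_le_right hsinc (by simp : 1 ≤ 1 + |y|)

lemma kernelWeight_eq_kernelIntegral (ha : 1 / 8 ≤ a) (hn : n ≠ 0) (hβ : 0 ≤ β) :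
    kernelWeight a n = kernelIntegral a β fun s ↦ (n : ℂ) ^ (-s) := by
  refine kernelIntegral_eq_of_le (C := 1) ha hβ
    (fun s _ _ ↦ differentiableAt_id.neg.const_cpow (Or.inl (Nat.cast_ne_zero.2 hn)))
    fun s hs _ ↦ ?_
  have hle : (n : ℝ) ^ (-s).re ≤ 1 :=
    Real.rpow_le_one_of_one_le_of_nonpos (Nat.one_le_cast.2 hn.bot_lt) (by simpa using hs)
  rw [norm_natCast_cpow_of_pos hn.bot_lt]
  linarith [abs_nonneg s.im]

lemma norm_natCast_cpow_mul_jacksonKernel_le (ha : 0 < a) (hn : n ≠ 0)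
    (hna : 4 * a ≤ Real.log n) {x : ℝ} (hx : 0 < x) (y : ℝ) :
    ‖(n : ℂ) ^ (-(x + y * I)) * jacksonKernel a (x + y * I)‖ ≤
      4 / (a ^ 2 * x ^ 2) * (1 + (a * y) ^ 2)⁻¹ := by
  have hK := norm_jacksonKernel_mul_le ha (x + y * I)
  rw [norm_ofReal_add_mul_I_sq, show (x + y * I : ℂ).re = x by simp, abs_of_pos hx] at hK
  have hpow : ‖(n : ℂ) ^ (-(x + y * I))‖ ≤ Real.exp (-(4 * a * x)) := by
    rw [norm_natCast_cpow_of_pos hn.bot_lt, Real.rpow_def_of_pos (Nat.cast_pos.2 hn.bot_lt),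
      show (-(x + y * I) : ℂ).re = -x by simp]
    gcongr
    nlinarith
  have hweight : a ^ 2 * x ^ 2 * (1 + (a * y) ^ 2) ≤ (1 + a ^ 2 * (x ^ 2 + y ^ 2)) ^ 2 := by
    nlinarith [mul_pos (pow_pos ha 2) (pow_pos hx 2), mul_nonneg (sq_nonneg a) (sq_nonneg y)]
  rw [← div_eq_mul_inv, div_div, le_div_iff₀ (by positivity), norm_mul]
  calc _ ≤ Real.exp (-(4 * a * x)) * ‖jacksonKernel a (x + y * I)‖ *
        (1 + a ^ 2 * (x ^ 2 + y ^ 2)) ^ 2 := by gcongr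
    _ ≤ Real.exp (-(4 * a * x)) * (4 * Real.exp (4 * a * x)) := by
      rw [mul_assoc]
      gcongr
    _ = 4 := by rw [mul_left_comm, ← Real.exp_add, neg_add_cancel, Real.exp_zero, mul_one]

lemma kernelWeight_eq_zero (ha : 1 / 8 ≤ a) (hn : n ≠ 0) (hna : 4 * a ≤ Real.log n) :
    kernelWeight a n = 0 := by
  have ha0 : 0 < a := by linarith
  have hdecay : ∀ x : ℝ, 0 < x → ‖kernelWeight a n‖ ≤ 4 * π / a ^ 3 / x ^ 2 := fun x hx ↦ calc
    ‖kernelWeight a n‖ ≤ ∫ y : ℝ, 4 / (a ^ 2 * x ^ 2) * (1 + (a * y) ^ 2)⁻¹ := by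
      rw [kernelWeight_eq_kernelIntegral ha hn hx.le]
      exact norm_integral_le_of_norm_le ((integrable_inv_one_add_mul_sq ha0.ne').const_mul _) <|
        ae_of_all _ (norm_natCast_cpow_mul_jacksonKernel_le ha0 hn hna hx)
    _ = 4 * π / a ^ 3 / x ^ 2 := by
      rw [integral_const_mul, integral_inv_one_add_mul_sq ha0]
      field_simp
  have hlim : Tendsto (fun x : ℝ ↦ 4 * π / a ^ 3 / x ^ 2) atTop (nhds 0) :=
    tendsto_const_nhds.div_atTop (tendsto_pow_atTop two_ne_zero)
  exact norm_le_zero_iff.1 (ge_of_tendsto hlim ((eventually_gt_atTop 0).mono hdecay))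

end KernelWeight

section LSeriesSmoothing

variable {f : ℕ → ℂ} {s₀ : ℂ} {a β : ℝ}

lemma lseriesTerm_add (f : ℕ → ℂ) (s w : ℂ) (n : ℕ) :
    LSeries.term f (s + w) n = LSeries.term f s n * (n : ℂ) ^ (-w) := by
  rcases eq_or_ne n 0 with rfl | hn
  · simp
  rw [LSeries.term_of_ne_zero hn, LSeries.term_of_ne_zero hn, cpow_neg,
    cpow_add _ _ (Nat.cast_ne_zero.2 hn), div_mul_eq_div_div, div_eq_mul_inv _ ((n : ℂ) ^ w)]

lemma kernelIntegral_lseriesTerm (ha : 1 / 8 ≤ a) (hβ : 0 ≤ β) (n : ℕ) :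
    kernelIntegral a β (fun s ↦ LSeries.term f (s₀ + s) n) =
      LSeries.term (fun n ↦ f n * kernelWeight a n) s₀ n := by
  rcases eq_or_ne n 0 with rfl | hn
  · simp [kernelIntegral]
  simp only [kernelIntegral, lseriesTerm_add, mul_assoc, integral_const_mul]
  rw [LSeries.term_of_ne_zero hn, LSeries.term_of_ne_zero hn, mul_div_right_comm,
    kernelWeight_eq_kernelIntegral ha hn hβ, kernelIntegral]

lemma integrable_lseriesTerm_mul_jacksonKernel (ha : 1 / 8 ≤ a) (n : ℕ) :
    Integrable fun y : ℝ ↦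
      LSeries.term f (s₀ + (β + y * I)) n * jacksonKernel a (β + y * I) := by
  rcases eq_or_ne n 0 with rfl | hn
  · simp
  refine integrable_mul_jacksonKernel (F := fun s ↦ LSeries.term f (s₀ + s) n)
    (C := ‖LSeries.term f (s₀ + β) n‖) ha
    (continuous_vertical_line (G := fun s ↦ LSeries.term f (s₀ + s) n) fun s _ ↦ ?_) fun y ↦ ?_
  · simp only [lseriesTerm_add]
    exact (differentiableAt_id.neg.const_cpow (Or.inl (Nat.cast_ne_zero.2 hn))).const_mul _
  · have hnorm : ‖LSeries.term f (s₀ + (β + y * I)) n‖ = ‖LSeries.term f (s₀ + β) n‖ := by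
      simp [LSeries.norm_term_eq]
    simpa only [hnorm] using le_mul_of_one_le_right (norm_nonneg _) (by simp)

lemma kernelIntegral_LSeries (ha : 1 / 8 ≤ a) (hβ : 0 ≤ β) (hf : LSeriesSummable f (s₀ + β)) :
    kernelIntegral a β (fun s ↦ LSeries f (s₀ + s)) =
      LSeries (fun n ↦ f n * kernelWeight a n) s₀ := by
  have hsummable : Summable fun n ↦ ∫ y : ℝ,
      ‖LSeries.term f (s₀ + (β + y * I)) n * jacksonKernel a (β + y * I)‖ := by
    have hnorm : ∀ (n : ℕ) (y : ℝ),
        ‖LSeries.term f (s₀ + (β + y * I)) n‖ = ‖LSeries.term f (s₀ + β) n‖ := by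
      simp [LSeries.norm_term_eq]
    simp only [norm_mul, hnorm, integral_const_mul]
    exact hf.norm.mul_right _
  calc kernelIntegral a β (fun s ↦ LSeries f (s₀ + s))
    _ = ∫ y : ℝ, ∑' n, LSeries.term f (s₀ + (β + y * I)) n * jacksonKernel a (β + y * I) := by
      simp only [kernelIntegral, LSeries, tsum_mul_right]
    _ = ∑' n, kernelIntegral a β fun s ↦ LSeries.term f (s₀ + s) n :=
      (integral_tsum_of_summable_integral_norm
        (integrable_lseriesTerm_mul_jacksonKernel ha) hsummable).symm
    _ = LSeries (fun n ↦ f n * kernelWeight a n) s₀ :=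
      tsum_congr (kernelIntegral_lseriesTerm ha hβ)

end LSeriesSmoothing

/-- The von Mangoldt function smoothed by `kernelWeight a`; it is supported on `n < exp (4 * a)`,
so its `LSeries` is a Dirichlet polynomial. -/
def smoothedVonMangoldt (a : ℝ) : ArithmeticFunction ℂ :=
  ⟨fun n ↦ ArithmeticFunction.vonMangoldt n * kernelWeight a n, by simp⟩

lemma smoothedVonMangoldt_apply (a : ℝ) (n : ℕ) :
    smoothedVonMangoldt a n = ArithmeticFunction.vonMangoldt n * kernelWeight a n := rfl

lemma logDeriv_riemannZeta₁_eq {s : ℂ} (hs : 1 < s.re) :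
    logDeriv riemannZeta₁ s =
      1 / (s - 1) - LSeries (fun n ↦ (ArithmeticFunction.vonMangoldt n : ℂ)) s := by
  have hs1 : s ≠ 1 := by
    rintro rfl
    simp at hs
  have heq : riemannZeta₁ =ᶠ[nhds s] fun z ↦ (z - 1) * riemannZeta z := by
    filter_upwards [isOpen_compl_singleton.mem_nhds hs1] with z hz
    exact riemannZeta₁_eq_sub_one_mul hz
  have hlinear : logDeriv (fun z ↦ z - 1) s = 1 / (s - 1) := by simp [logDeriv_apply]
  rw [ArithmeticFunction.LSeries_vonMangoldt_eq_deriv_riemannZeta_div hs, logDeriv_apply,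
    heq.deriv_eq, heq.eq_of_nhds, ← logDeriv_apply,
    logDeriv_mul (f := fun z ↦ z - 1) s (sub_ne_zero.2 hs1) (riemannZeta_ne_zero_of_one_lt_re hs)
      (by fun_prop) (differentiableAt_riemannZeta hs1), hlinear, logDeriv_apply]
  ring

lemma differentiableAt_logDeriv_riemannZeta₁ (hRH : RiemannHypothesis) {s : ℂ}
    (hs : 1 / 2 < s.re) : DifferentiableAt ℂ (logDeriv riemannZeta₁) s := by
  have hanalytic : AnalyticAt ℂ riemannZeta₁ s := differentiable_riemannZeta₁.analyticAt s
  exact hanalytic.deriv.differentiableAt.div hanalytic.differentiableAt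
    (riemannZeta₁_ne_zero_of_half_lt_re hRH hs)

section ExplicitFormula

variable {a : ℝ} {s₀ : ℂ}

lemma differentiableAt_logDeriv_riemannZeta₁_add (hRH : RiemannHypothesis) (hs₀ : 1 / 2 < s₀.re)
    {s : ℂ} (hs : 0 ≤ s.re) : DifferentiableAt ℂ (fun s ↦ logDeriv riemannZeta₁ (s₀ + s)) s :=
  DifferentiableAt.comp s
    (differentiableAt_logDeriv_riemannZeta₁ hRH (by rw [add_re]; linarith)) (by fun_prop)

lemma norm_logDeriv_riemannZeta₁_add_le (hRH : RiemannHypothesis) (hs₀ : 1 / 2 < s₀.re) {s : ℂ}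
    (hs : 0 ≤ s.re) (hs' : s.re ≤ 2 - s₀.re) :
    ‖logDeriv riemannZeta₁ (s₀ + s)‖ ≤
      60 / (s₀.re - 1 / 2) ^ 2 * logHeight s₀.im * (1 + |s.im|) := calc
  ‖logDeriv riemannZeta₁ (s₀ + s)‖
    ≤ 60 / (s₀.re - 1 / 2) ^ 2 * logHeight (s₀.im + s.im) := by
      simpa using norm_logDeriv_riemannZeta₁_le hRH (s := s₀ + s) (sub_pos.2 hs₀)
        (by rw [add_re]; linarith) (by rw [add_re]; linarith)
  _ ≤ 60 / (s₀.re - 1 / 2) ^ 2 * (logHeight s₀.im * (1 + |s.im|)) := by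
    gcongr
    exact logHeight_add_le _ _
  _ = _ := by ring

lemma integrable_logDeriv_riemannZeta₁_mul_jacksonKernel (hRH : RiemannHypothesis)
    (ha : 1 / 8 ≤ a) (hs₀ : 1 / 2 < s₀.re) {β : ℝ} (hβ : 0 ≤ β) (hβ' : β ≤ 2 - s₀.re) :
    Integrable fun y : ℝ ↦
      logDeriv riemannZeta₁ (s₀ + (β + y * I)) * jacksonKernel a (β + y * I) := by
  refine integrable_mul_jacksonKernel (F := fun s ↦ logDeriv riemannZeta₁ (s₀ + s))
    (C := 60 / (s₀.re - 1 / 2) ^ 2 * logHeight s₀.im) ha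
    (continuous_vertical_line fun s hs ↦
      differentiableAt_logDeriv_riemannZeta₁_add hRH hs₀ (hs ▸ hβ)) fun y ↦ ?_
  simpa using norm_logDeriv_riemannZeta₁_add_le hRH hs₀ (s := β + y * I)
    (by simpa using hβ) (by simpa using hβ')

lemma norm_one_div_add_sub_one_le (hs₀ : s₀.im ≠ 0) {s : ℂ} (hs : s.re = 2 - s₀.re) :
    ‖1 / (s₀ + s - 1)‖ ≤ |s₀.im|⁻¹ * (1 + |s.im|) := by
  have hone : 1 ≤ ‖s₀ + s - 1‖ := by
    have hre : (s₀ + s - 1).re = 1 := by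
      rw [sub_re, add_re, one_re]
      linarith
    exact hre ▸ re_le_norm (s₀ + s - 1)
  have him : |s₀.im + s.im| ≤ ‖s₀ + s - 1‖ := by simpa using abs_im_le_norm (s₀ + s - 1)
  have htriangle : |s₀.im| ≤ |s₀.im + s.im| + |s.im| := by
    simpa using abs_sub (s₀.im + s.im) s.im
  rw [norm_div, norm_one, inv_mul_eq_div,
    div_le_div_iff₀ (by linarith) (abs_pos.2 hs₀)]
  nlinarith [abs_nonneg s.im]

lemma differentiableAt_one_div_add_sub_one {s : ℂ} (hs : s.re = 2 - s₀.re) :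
    DifferentiableAt ℂ (fun s ↦ 1 / (s₀ + s - 1)) s := by
  have hne : s₀ + s - 1 ≠ 0 := fun h ↦ by
    have hre := congrArg re h
    rw [sub_re, add_re, one_re, zero_re] at hre
    linarith
  fun_prop (disch := exact hne)

lemma norm_kernelIntegral_pole_le (ha : 1 / 8 ≤ a) (hs₀ : 1 / 2 ≤ s₀.re) (hs₀' : s₀.re ≤ 2)
    (him : s₀.im ≠ 0) :
    ‖kernelIntegral a (2 - s₀.re) fun s ↦ 1 / (s₀ + s - 1)‖ ≤
      32768 * π * Real.exp (6 * a) / |s₀.im| := by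
  have hexponent : 4 * a * |2 - s₀.re| ≤ 6 * a := by
    rw [abs_of_nonneg (by linarith)]
    nlinarith
  calc _ ≤ 32768 * |s₀.im|⁻¹ * Real.exp (4 * a * |2 - s₀.re|) * π :=
        norm_kernelIntegral_le ha fun y ↦ by
          simpa using norm_one_div_add_sub_one_le him (s := (2 - s₀.re : ℝ) + y * I) (by simp)
    _ ≤ 32768 * |s₀.im|⁻¹ * Real.exp (6 * a) * π := by gcongr
    _ = _ := by ring

lemma kernelIntegral_logDeriv_riemannZeta₁ (hRH : RiemannHypothesis) (ha : 1 / 8 ≤ a)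
    (hs₀ : 1 / 2 < s₀.re) (hs₀' : s₀.re ≤ 2) (him : s₀.im ≠ 0) :
    kernelIntegral a 0 (fun s ↦ logDeriv riemannZeta₁ (s₀ + s)) =
      kernelIntegral a (2 - s₀.re) (fun s ↦ 1 / (s₀ + s - 1)) -
        LSeries (smoothedVonMangoldt a) s₀ := by
  set β := 2 - s₀.re with hβ
  have hβ0 : 0 ≤ β := by linarith
  have hshift := kernelIntegral_eq_of_le ha hβ0
    (fun s hs _ ↦ differentiableAt_logDeriv_riemannZeta₁_add hRH hs₀ hs)
    (fun s hs hs' ↦ norm_logDeriv_riemannZeta₁_add_le hRH hs₀ hs hs')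
  have hΛ := kernelIntegral_LSeries (s₀ := s₀) ha hβ0
    (ArithmeticFunction.LSeriesSummable_vonMangoldt (by simp [hβ]))
  have hpole : Integrable fun y : ℝ ↦
      1 / (s₀ + (β + y * I) - 1) * jacksonKernel a (β + y * I) :=
    integrable_mul_jacksonKernel (F := fun s ↦ 1 / (s₀ + s - 1)) ha
      (continuous_vertical_line fun s hs ↦ differentiableAt_one_div_add_sub_one hs) fun y ↦ by
        simpa using norm_one_div_add_sub_one_le him (s := β + y * I) (by simp [hβ])
  rw [hshift, eq_sub_iff_add_eq', ← eq_sub_iff_add_eq]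
  refine hΛ.symm.trans (Eq.trans ?_ (integral_sub hpole
    (integrable_logDeriv_riemannZeta₁_mul_jacksonKernel hRH ha hs₀ hβ0 le_rfl)))
  refine integral_congr_ae (ae_of_all _ fun y ↦ ?_)
  simp only [logDeriv_riemannZeta₁_eq (s := s₀ + (β + y * I)) (by simp [hβ])]
  ring

end ExplicitFormula

/-! ### Multiplicities in short windows -/

section Window

variable {a e t : ℝ}

lemma sum_window_div_le_sum_mul_poisson (S : Finset ℝ) {w : ℝ → ℝ} (hw : ∀ γ, 0 ≤ w γ)
    (he : 0 < e) {y : ℝ} (hy : |y| ≤ e) :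
    (∑ γ ∈ S with |γ - t| ≤ e, w γ) / (5 * e) ≤
      ∑ γ ∈ S, w γ * (e / (e ^ 2 + (t + y - γ) ^ 2)) := by
  rw [Finset.sum_div]
  refine le_trans (Finset.sum_le_sum fun γ hγ ↦ ?_) (Finset.sum_le_sum_of_subset_of_nonneg
    (Finset.filter_subset _ S) fun γ _ _ ↦ mul_nonneg (hw γ) (by positivity))
  have hdist : |t + y - γ| ≤ 2 * e := calc
    |t + y - γ| = |y - (γ - t)| := by ring_nf
    _ ≤ |y| + |γ - t| := abs_sub _ _
    _ ≤ 2 * e := by linarith [(Finset.mem_filter.1 hγ).2]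
  have hsq : (t + y - γ) ^ 2 ≤ (2 * e) ^ 2 := sq_le_sq' (abs_le.1 hdist).1 (abs_le.1 hdist).2
  rw [div_eq_mul_one_div]
  refine mul_le_mul_of_nonneg_left ?_ (hw γ)
  rw [div_le_div_iff₀ (by positivity) (by positivity)]
  nlinarith

lemma sum_ordMult_mul_sinc_le (hRH : RiemannHypothesis) (S : Finset ℝ) (he : 0 < e)
    (he' : e < 3 / 2) (a y : ℝ) :
    (∑ γ ∈ S, ordMult γ * (e / (e ^ 2 + (t + y - γ) ^ 2))) * Real.sinc (a * y) ^ 4 ≤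
      (logDeriv riemannZeta₁ (1 / 2 + e + t * I + y * I)).re * Real.sinc (a * y) ^ 4 +
        6 * logHeight t * (Real.sinc (a * y) ^ 4 * (1 + |y|)) := by
  have hre : (1 / 2 + e + t * I + y * I : ℂ).re = 1 / 2 + e := by simp
  have hzeros := sum_ordMult_mul_div_le hRH S (s := 1 / 2 + e + t * I + y * I)
    (by linarith) (by linarith)
  have him : (1 / 2 + e + t * I + y * I : ℂ).im = t + y := by simp
  rw [hre, him, add_sub_cancel_left] at hzeros
  calc _ ≤ ((logDeriv riemannZeta₁ (1 / 2 + e + t * I + y * I)).re +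
        6 * (logHeight t * (1 + |y|))) * Real.sinc (a * y) ^ 4 := by
        gcongr
        linarith [logHeight_add_le t y]
    _ = _ := by ring

lemma two_mul_mul_le_integral {f : ℝ → ℝ} {c : ℝ} (hf : Integrable f) (hf0 : ∀ y, 0 ≤ f y)
    (he : 0 ≤ e) (hc : ∀ y, |y| ≤ e → c ≤ f y) : 2 * e * c ≤ ∫ y, f y := calc
  2 * e * c = c * volume.real (Set.Icc (-e) e) := by
    rw [Real.volume_real_Icc_of_le (by linarith)]
    ring
  _ ≤ ∫ y in Set.Icc (-e) e, f y :=
    setIntegral_ge_of_const_le_real measurableSet_Icc (by simp) (fun y hy ↦ hc y (abs_le.2 hy))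
      hf.integrableOn
  _ ≤ ∫ y, f y := setIntegral_le_integral hf (ae_of_all _ hf0)

lemma integrable_re_logDeriv_mul_sinc (hRH : RiemannHypothesis) (ha : 1 / 8 ≤ a) {s₀ : ℂ}
    (hs₀ : 1 / 2 < s₀.re) (hs₀' : s₀.re ≤ 2) :
    Integrable fun y : ℝ ↦
      (logDeriv riemannZeta₁ (s₀ + y * I)).re * Real.sinc (a * y) ^ 4 := by
  simpa [jacksonKernel_ofReal_mul_I, -ofReal_pow] using
    (integrable_logDeriv_riemannZeta₁_mul_jacksonKernel hRH ha hs₀ le_rfl (sub_nonneg.2 hs₀')).re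

lemma re_kernelIntegral_zero {F : ℂ → ℂ} (hF : Integrable fun y : ℝ ↦
      F (y * I) * jacksonKernel a (y * I)) :
    (kernelIntegral a 0 F).re = ∫ y : ℝ, (F (y * I)).re * Real.sinc (a * y) ^ 4 := by
  have h := integral_re hF
  simp only [RCLike.re_eq_complex_re, jacksonKernel_ofReal_mul_I, re_mul_ofReal] at h
  simp [kernelIntegral, h, jacksonKernel_ofReal_mul_I, -ofReal_pow]

lemma integral_re_logDeriv_mul_sinc_le (hRH : RiemannHypothesis) (ha : 1 / 8 ≤ a) {s₀ : ℂ}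
    (hs₀ : 1 / 2 < s₀.re) (hs₀' : s₀.re ≤ 2) (him : s₀.im ≠ 0) :
    ∫ y : ℝ, (logDeriv riemannZeta₁ (s₀ + y * I)).re * Real.sinc (a * y) ^ 4 ≤
      ‖LSeries (smoothedVonMangoldt a) s₀‖ + 32768 * π * Real.exp (6 * a) / |s₀.im| := by
  have hinteg := integrable_logDeriv_riemannZeta₁_mul_jacksonKernel hRH ha hs₀ le_rfl
    (sub_nonneg.2 hs₀')
  simp only [ofReal_zero, zero_add] at hinteg
  rw [← re_kernelIntegral_zero (F := fun s ↦ logDeriv riemannZeta₁ (s₀ + s)) hinteg,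
    kernelIntegral_logDeriv_riemannZeta₁ hRH ha hs₀ hs₀' him]
  refine (re_le_norm _).trans ((norm_sub_le _ _).trans ?_)
  linarith [norm_kernelIntegral_pole_le ha hs₀.le hs₀' him]

lemma sum_window_ordMult_div_le (hRH : RiemannHypothesis) (S : Finset ℝ) (ha : 0 ≤ a) (he : 0 < e)
    (he' : e < 3 / 2) (hae : a * e ≤ 1 / 32) {y : ℝ} (hy : |y| ≤ e) :
    (∑ γ ∈ S with |γ - t| ≤ e, (ordMult γ : ℝ)) / (5 * e) * (1 / 2) ≤
      (logDeriv riemannZeta₁ (1 / 2 + e + t * I + y * I)).re * Real.sinc (a * y) ^ 4 +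
        6 * logHeight t * (Real.sinc (a * y) ^ 4 * (1 + |y|)) := by
  have hay : |a * y| ≤ 1 / 32 := by
    rw [abs_mul, abs_of_nonneg ha]
    exact (mul_le_mul_of_nonneg_left hy ha).trans hae
  refine le_trans ?_ (sum_ordMult_mul_sinc_le hRH S he he' a y)
  gcongr
  · exact sum_window_div_le_sum_mul_poisson S (fun _ ↦ Nat.cast_nonneg _) he hy
  · exact half_le_sinc_pow_four hay

lemma sum_window_ordMult_le (hRH : RiemannHypothesis) (S : Finset ℝ) (ha : 1 / 8 ≤ a)
    (ht : t ≠ 0) (he : e = 1 / (32 * a)) :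
    1 / 5 * ∑ γ ∈ S with |γ - t| ≤ e, (ordMult γ : ℝ) ≤
      ‖LSeries (smoothedVonMangoldt a) (1 / 2 + e + t * I)‖ +
        32768 * π * Real.exp (6 * a) / |t| + 216 * (π / a) * logHeight t := by
  have he0 : 0 < e := by
    rw [he]
    positivity
  have he' : e ≤ 1 / 4 := by
    rw [he, div_le_div_iff₀ (by positivity) (by norm_num)]
    linarith
  have hae : a * e = 1 / 32 := by
    rw [he]
    field
  have hs₀ : (1 / 2 + e + t * I : ℂ).re = 1 / 2 + e := by simp
  have him : (1 / 2 + e + t * I : ℂ).im = t := by simp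
  have hlogDeriv := integrable_re_logDeriv_mul_sinc hRH ha (s₀ := 1 / 2 + e + t * I)
    (by rw [hs₀]; linarith) (by rw [hs₀]; linarith)
  have hheight := (integrable_sinc_pow_four_mul ha).const_mul (6 * logHeight t)
  set M := ∑ γ ∈ S with |γ - t| ≤ e, (ordMult γ : ℝ)
  calc 1 / 5 * M = 2 * e * (M / (5 * e) * (1 / 2)) := by field
    _ ≤ ∫ y : ℝ, ((logDeriv riemannZeta₁ (1 / 2 + e + t * I + y * I)).re * Real.sinc (a * y) ^ 4 +
        6 * logHeight t * (Real.sinc (a * y) ^ 4 * (1 + |y|))) := by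
      refine two_mul_mul_le_integral (hlogDeriv.add hheight) (fun y ↦ ?_) he0.le fun y hy ↦ ?_
      · exact le_trans (by positivity) (sum_ordMult_mul_sinc_le hRH S he0 (by linarith) a y)
      · exact sum_window_ordMult_div_le hRH S (by linarith) he0 (by linarith) hae.le hy
    _ ≤ _ := by
      rw [integral_add hlogDeriv hheight, integral_const_mul]
      have hmain := integral_re_logDeriv_mul_sinc_le hRH ha (s₀ := 1 / 2 + e + t * I)
        (by rw [hs₀]; linarith) (by rw [hs₀]; linarith) (by rwa [him])
      rw [him] at hmain
      nlinarith [integral_sinc_pow_four_mul_le ha, one_le_logHeight t]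

end Window

/-! ### Dirichlet powers of arithmetic functions -/

section DirichletPowers

open ArithmeticFunction

lemma sum_vonMangoldt_div_le (N : ℕ) :
    ∑ n ∈ Finset.Ioc 0 N, vonMangoldt n / n ≤ 2 * Real.log N := by
  obtain rfl | hN := eq_or_ne N 0
  · simp
  have hterm : ∀ n ∈ Finset.Ioc 0 N,
      N * (vonMangoldt n / n) ≤ 2 * (vonMangoldt n * (N / n : ℕ)) := fun n hn ↦ by
    obtain ⟨hn0, hnN⟩ := Finset.mem_Ioc.1 hn
    have hfloor : (N / n : ℝ) ≤ 2 * (N / n : ℕ) := by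
      have hlt : (N : ℝ) / n < (N / n : ℕ) + 1 := by
        rw [← Nat.floor_div_eq_div (K := ℝ)]
        exact Nat.lt_floor_add_one _
      have hone : (1 : ℝ) ≤ (N / n : ℕ) := by exact_mod_cast Nat.div_pos hnN hn0
      linarith
    calc N * (vonMangoldt n / n) = vonMangoldt n * (N / n) := by ring
      _ ≤ vonMangoldt n * (2 * (N / n : ℕ)) :=
        mul_le_mul_of_nonneg_left hfloor vonMangoldt_nonneg
      _ = 2 * (vonMangoldt n * (N / n : ℕ)) := by ring
  have hlog : ∀ n ∈ Finset.Ioc 0 N, ArithmeticFunction.log n ≤ Real.log N := fun n hn ↦ by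
    obtain ⟨hn0, hnN⟩ := Finset.mem_Ioc.1 hn
    exact Real.log_le_log (by exact_mod_cast hn0) (by exact_mod_cast hnN)
  refine le_of_mul_le_mul_left ?_ (Nat.cast_pos.2 (Nat.pos_of_ne_zero hN) : (0 : ℝ) < N)
  calc N * ∑ n ∈ Finset.Ioc 0 N, vonMangoldt n / n
      ≤ 2 * ∑ n ∈ Finset.Ioc 0 N, vonMangoldt n * (N / n : ℕ) := by
        rw [Finset.mul_sum, Finset.mul_sum]
        exact Finset.sum_le_sum hterm
    _ = 2 * ∑ n ∈ Finset.Ioc 0 N, ArithmeticFunction.log n := by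
        rw [← sum_Ioc_mul_zeta_eq_sum, vonMangoldt_mul_zeta]
    _ ≤ 2 * (N * Real.log N) := by
        have hsum := Finset.sum_le_card_nsmul _ _ _ hlog
        rw [Nat.card_Ioc, Nat.sub_zero, nsmul_eq_mul] at hsum
        linarith
    _ = N * (2 * Real.log N) := by ring

variable {f g : ArithmeticFunction ℝ}

lemma arithmeticFunction_mul_nonneg (hf : ∀ n, 0 ≤ f n) (hg : ∀ n, 0 ≤ g n) (n : ℕ) :
    0 ≤ (f * g) n := by
  rw [mul_apply]
  exact Finset.sum_nonneg fun p _ ↦ mul_nonneg (hf p.1) (hg p.2)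

lemma arithmeticFunction_pow_nonneg (hf : ∀ n, 0 ≤ f n) (k n : ℕ) : 0 ≤ (f ^ k) n := by
  induction k generalizing n with
  | zero => rw [pow_zero, one_apply]; split_ifs <;> norm_num
  | succ k ih => rw [pow_succ]; exact arithmeticFunction_mul_nonneg ih hf n

lemma sum_mul_div_le_mul_sum_div (hf : ∀ n, 0 ≤ f n) (hg : ∀ n, 0 ≤ g n) (N : ℕ) :
    ∑ n ∈ Finset.Ioc 0 N, (f * g) n / n ≤
      (∑ n ∈ Finset.Ioc 0 N, f n / n) * ∑ n ∈ Finset.Ioc 0 N, g n / n := by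
  have hconv : ∀ n ∈ Finset.Ioc 0 N, (f * g) n / n =
      ∑ p ∈ Finset.Ioc 0 N ×ˢ Finset.Ioc 0 N with p.1 * p.2 = n, f p.1 / p.1 * (g p.2 / p.2) := by
    intro n hn
    obtain ⟨hn0, hnN⟩ := Finset.mem_Ioc.1 hn
    rw [mul_apply, Nat.divisorsAntidiagonal_eq_prod_filter_of_le hn0.ne' hnN, Finset.sum_div]
    refine Finset.sum_congr rfl fun p hp ↦ ?_
    rw [← (Finset.mem_filter.1 hp).2, Nat.cast_mul, div_mul_div_comm]
  rw [Finset.sum_mul_sum, ← Finset.sum_product', Finset.sum_congr rfl hconv]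
  exact Finset.sum_fiberwise_le_sum_of_sum_fiber_nonneg fun n _ ↦ Finset.sum_nonneg fun p _ ↦
    mul_nonneg (div_nonneg (hf _) p.1.cast_nonneg) (div_nonneg (hg _) p.2.cast_nonneg)

lemma sum_pow_div_le_pow_sum_div (hf : ∀ n, 0 ≤ f n) (k N : ℕ) :
    ∑ n ∈ Finset.Ioc 0 N, (f ^ k) n / n ≤ (∑ n ∈ Finset.Ioc 0 N, f n / n) ^ k := by
  induction k with
  | zero =>
    calc ∑ n ∈ Finset.Ioc 0 N, ((1 : ArithmeticFunction ℝ) n : ℝ) / n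
        ≤ ∑ n ∈ Finset.Ioc 0 N, if n = 1 then (1 : ℝ) else 0 :=
          Finset.sum_le_sum fun n _ ↦ by rw [one_apply]; split_ifs with h <;> simp [h]
      _ ≤ 1 := by rw [Finset.sum_ite_eq']; split_ifs <;> norm_num
  | succ k ih =>
    rw [pow_succ, pow_succ]
    refine (sum_mul_div_le_mul_sum_div (arithmeticFunction_pow_nonneg hf k) hf N).trans ?_
    exact mul_le_mul_of_nonneg_right ih
      (Finset.sum_nonneg fun n _ ↦ div_nonneg (hf n) n.cast_nonneg)

lemma vonMangoldt_pow_le_log_pow (k n : ℕ) : (vonMangoldt ^ k) n ≤ Real.log n ^ k := by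
  induction k generalizing n with
  | zero => rw [pow_zero, pow_zero, one_apply]; split_ifs <;> norm_num
  | succ k ih =>
    calc (vonMangoldt ^ (k + 1)) n
        = ∑ p ∈ n.divisorsAntidiagonal, vonMangoldt p.1 * (vonMangoldt ^ k) p.2 := by
          rw [pow_succ', mul_apply]
      _ ≤ ∑ p ∈ n.divisorsAntidiagonal, vonMangoldt p.1 * Real.log n ^ k := by
          refine Finset.sum_le_sum fun p hp ↦ mul_le_mul_of_nonneg_left ?_ vonMangoldt_nonneg
          have hpn : p.2 ≤ n := Nat.divisor_le (Nat.snd_mem_divisors_of_mem_antidiagonal hp)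
          have hp0 : 0 < p.2 :=
            Nat.pos_of_mem_divisors (Nat.snd_mem_divisors_of_mem_antidiagonal hp)
          exact (ih p.2).trans (pow_le_pow_left₀ (Real.log_natCast_nonneg _)
            (Real.log_le_log (by exact_mod_cast hp0) (by exact_mod_cast hpn)) k)
      _ = Real.log n ^ (k + 1) := by
          rw [← Finset.sum_mul, Nat.sum_divisorsAntidiagonal (f := fun i _ ↦ vonMangoldt i),
            vonMangoldt_sum, pow_succ']

variable {F : ArithmeticFunction ℂ} {W x : ℝ}

lemma norm_pow_apply_le (hF : ∀ n, ‖F n‖ ≤ W * g n) (k n : ℕ) :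
    ‖(F ^ k) n‖ ≤ W ^ k * (g ^ k) n := by
  induction k generalizing n with
  | zero => simp only [pow_zero, one_apply]; split_ifs <;> simp
  | succ k ih =>
    simp only [pow_succ, mul_apply, Finset.mul_sum]
    refine (norm_sum_le _ _).trans (Finset.sum_le_sum fun p _ ↦ ?_)
    calc ‖(F ^ k) p.1 * F p.2‖ ≤ (W ^ k * (g ^ k) p.1) * (W * g p.2) := by
          rw [norm_mul]
          exact mul_le_mul (ih _) (hF _) (norm_nonneg _) ((norm_nonneg _).trans (ih _))
      _ = W ^ k * W * ((g ^ k) p.1 * g p.2) := by ring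

lemma pow_apply_eq_zero_of_lt_log (hF : ∀ n : ℕ, x < Real.log n → F n = 0) (k : ℕ) {n : ℕ}
    (hn : k * x < Real.log n) : (F ^ k) n = 0 := by
  induction k generalizing n with
  | zero =>
    refine one_apply_ne ?_
    rintro rfl
    simp at hn
  | succ k ih =>
    rw [pow_succ, mul_apply]
    refine Finset.sum_eq_zero fun p hp ↦ ?_
    obtain ⟨rfl, hp0⟩ := Nat.mem_divisorsAntidiagonal.1 hp
    obtain ⟨hp1, hp2⟩ := mul_ne_zero_iff.1 hp0
    by_cases hlog : x < Real.log p.2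
    · rw [hF _ hlog, mul_zero]
    · rw [ih, zero_mul]
      rw [Nat.cast_mul, Real.log_mul (by exact_mod_cast hp1) (by exact_mod_cast hp2)] at hn
      push_cast at hn
      linarith

lemma lseriesSummable_of_eq_zero_of_lt_log (hF : ∀ n : ℕ, x < Real.log n → F n = 0) (s : ℂ) :
    LSeriesSummable F s := by
  refine LSeriesSummable.congr' s ?_ LSeriesSummable_zero
  filter_upwards [(Real.tendsto_log_atTop.comp tendsto_natCast_atTop_atTop).eventually_gt_atTop x]
    with n hn using (hF n hn).symm

lemma lseries_pow (hF : ∀ n : ℕ, x < Real.log n → F n = 0) (k : ℕ) (s : ℂ) :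
    LSeries (F ^ k : ArithmeticFunction ℂ) s = LSeries F s ^ k := by
  induction k with
  | zero => simpa [LSeries_delta] using congrArg (LSeries · s) one_eq_delta
  | succ k ih =>
    rw [pow_succ, pow_succ, LSeries_mul' _ (lseriesSummable_of_eq_zero_of_lt_log hF s), ih]
    exact lseriesSummable_of_eq_zero_of_lt_log (x := k * x)
      (fun n ↦ pow_apply_eq_zero_of_lt_log hF k) s

lemma lseries_eq_sum_exp (hF : ∀ n : ℕ, x < Real.log n → F n = 0) (σ t : ℝ) :
    LSeries F (σ + t * I) = ∑ n ∈ Finset.Ioc 0 ⌊Real.exp x⌋₊,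
      F n * ((n : ℝ) ^ (-σ) : ℝ) * exp (((-Real.log n : ℝ) : ℂ) * I * t) := by
  have hterm : ∀ n ∉ Finset.Ioc 0 ⌊Real.exp x⌋₊, LSeries.term F (σ + t * I) n = 0 := by
    intro n hn
    obtain rfl | hn0 := eq_or_ne n 0
    · exact LSeries.term_zero _ _
    have hlt : ⌊Real.exp x⌋₊ < n := by
      by_contra! hle
      exact hn (Finset.mem_Ioc.2 ⟨Nat.pos_of_ne_zero hn0, hle⟩)
    have hxn : x < Real.log n :=
      (Real.lt_log_iff_exp_lt (by positivity)).2 ((Nat.floor_lt (Real.exp_nonneg x)).1 hlt)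
    rw [LSeries.term_of_ne_zero hn0, hF n hxn, zero_div]
  rw [LSeries, tsum_eq_sum hterm]
  refine Finset.sum_congr rfl fun n hn ↦ ?_
  have hn0 : n ≠ 0 := (Finset.mem_Ioc.1 hn).1.ne'
  have hn0' : (n : ℂ) ≠ 0 := Nat.cast_ne_zero.2 hn0
  rw [LSeries.term_of_ne_zero hn0, div_eq_mul_inv, ← cpow_neg, neg_add, cpow_add _ _ hn0',
    ← mul_assoc, cpow_def_of_ne_zero hn0' (-(t * I)), ← natCast_log, ofReal_cpow n.cast_nonneg]
  push_cast
  congr 2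
  ring

end DirichletPowers

/-! ### Mean values of Dirichlet polynomials -/

section MeanValue

variable {α β : ℝ}

lemma one_div_le_abs_log_sub_log {N m n : ℕ} (hm : m ∈ Finset.Ioc 0 N) (hn : n ∈ Finset.Ioc 0 N)
    (hmn : m ≠ n) : 1 / (N : ℝ) ≤ |Real.log m - Real.log n| := by
  wlog hlt : n < m generalizing m n
  · rw [abs_sub_comm]
    exact this hn hm hmn.symm (lt_of_le_of_ne (not_lt.1 hlt) hmn)
  obtain ⟨hm0, hmN⟩ := Finset.mem_Ioc.1 hm
  have hm' : (0 : ℝ) < m := by exact_mod_cast hm0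
  have hn' : (0 : ℝ) < n := by exact_mod_cast (Finset.mem_Ioc.1 hn).1
  have hsucc : (n : ℝ) + 1 ≤ m := by exact_mod_cast hlt
  calc 1 / (N : ℝ) ≤ 1 / m := by gcongr
    _ ≤ 1 - (m / n : ℝ)⁻¹ := by
      rw [inv_div, one_sub_div hm'.ne']
      gcongr
      linarith
    _ ≤ Real.log (m / n) := Real.one_sub_inv_le_log_of_pos (by positivity)
    _ = Real.log m - Real.log n := Real.log_div hm'.ne' hn'.ne'
    _ ≤ |Real.log m - Real.log n| := le_abs_self _

lemma norm_integral_exp_mul_I_le {y : ℝ} (hy : y ≠ 0) :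
    ‖∫ t : ℝ in α..β, exp (y * I * t)‖ ≤ 2 / |y| := by
  have hunit : ∀ t : ℝ, ‖exp (y * I * t)‖ = 1 := fun t ↦ by
    rw [mul_right_comm, ← ofReal_mul, norm_exp_ofReal_mul_I]
  have hyI : (y : ℂ) * I ≠ 0 := mul_ne_zero (ofReal_ne_zero.2 hy) I_ne_zero
  rw [integral_exp_mul_complex hyI, norm_div, norm_mul, norm_I, mul_one, norm_real,
    Real.norm_eq_abs]
  gcongr
  refine (norm_sub_le _ _).trans ?_
  rw [hunit, hunit]
  norm_num

variable {ι : Type*} (S : Finset ι) (c : ι → ℂ) (freq : ι → ℝ)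

lemma sq_norm_sum_mul_exp (t : ℝ) :
    ((‖∑ i ∈ S, c i * exp (freq i * I * t)‖ ^ 2 : ℝ) : ℂ) =
      ∑ i ∈ S, ∑ j ∈ S, c i * conj (c j) * exp ((freq i - freq j : ℝ) * I * t) := by
  rw [ofReal_pow, ← mul_conj', map_sum, Finset.sum_mul_sum]
  refine Finset.sum_congr rfl fun i _ ↦ Finset.sum_congr rfl fun j _ ↦ ?_
  rw [map_mul, ← exp_conj, mul_mul_mul_comm, ← exp_add]
  simp only [map_mul, conj_ofReal, conj_I, ofReal_sub]
  ring_nf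

lemma integral_sq_norm_sum_mul_exp :
    ((∫ t in α..β, ‖∑ i ∈ S, c i * exp (freq i * I * t)‖ ^ 2 : ℝ) : ℂ) =
      ∑ i ∈ S, ∑ j ∈ S,
        c i * conj (c j) * ∫ t : ℝ in α..β, exp ((freq i - freq j : ℝ) * I * t) := by
  have hcont : ∀ i j, Continuous fun t : ℝ ↦
      c i * conj (c j) * exp ((freq i - freq j : ℝ) * I * t) := fun i j ↦ by fun_prop
  rw [← intervalIntegral.integral_ofReal]
  simp only [sq_norm_sum_mul_exp]
  rw [intervalIntegral.integral_finsetSum fun i _ ↦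
    (continuous_finsetSum _ fun j _ ↦ hcont i j).intervalIntegrable _ _]
  refine Finset.sum_congr rfl fun i _ ↦ ?_
  rw [intervalIntegral.integral_finsetSum fun j _ ↦ (hcont i j).intervalIntegrable _ _]
  simp only [intervalIntegral.integral_const_mul]

variable {S c freq}

lemma norm_mul_integral_exp_le [DecidableEq ι] {δ : ℝ} (hδ : 0 < δ) (hαβ : α ≤ β) {i j : ι}
    (hsep : i ≠ j → δ ≤ |freq i - freq j|) :
    ‖c i * conj (c j) * ∫ t : ℝ in α..β, exp ((freq i - freq j : ℝ) * I * t)‖ ≤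
      (if i = j then (β - α) * ‖c i‖ ^ 2 else 0) + 2 / δ * (‖c i‖ * ‖c j‖) := by
  rw [norm_mul, norm_mul, RCLike.norm_conj]
  split_ifs with hij
  · subst hij
    have hnn : 0 ≤ 2 / δ * (‖c i‖ * ‖c i‖) := by positivity
    simp only [sub_self, ofReal_zero, zero_mul, exp_zero, intervalIntegral.integral_const,
      norm_smul, norm_one, mul_one, Real.norm_of_nonneg (sub_nonneg.2 hαβ)]
    linarith
  · have hgap := hsep hij
    have hne : freq i - freq j ≠ 0 := abs_pos.1 (hδ.trans_le hgap)
    calc ‖c i‖ * ‖c j‖ * ‖∫ t : ℝ in α..β, exp ((freq i - freq j : ℝ) * I * t)‖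
        ≤ ‖c i‖ * ‖c j‖ * (2 / δ) := by
          gcongr
          exact (norm_integral_exp_mul_I_le hne).trans (by gcongr)
      _ = 0 + 2 / δ * (‖c i‖ * ‖c j‖) := by ring

lemma integral_sq_norm_sum_mul_exp_le {δ : ℝ} (hδ : 0 < δ)
    (hsep : ∀ i ∈ S, ∀ j ∈ S, i ≠ j → δ ≤ |freq i - freq j|) (hαβ : α ≤ β) :
    ∫ t in α..β, ‖∑ i ∈ S, c i * exp (freq i * I * t)‖ ^ 2 ≤
      (β - α + 2 / δ * S.card) * ∑ i ∈ S, ‖c i‖ ^ 2 := by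
  classical
  calc ∫ t in α..β, ‖∑ i ∈ S, c i * exp (freq i * I * t)‖ ^ 2
      ≤ ∑ i ∈ S, ∑ j ∈ S,
          ((if i = j then (β - α) * ‖c i‖ ^ 2 else 0) + 2 / δ * (‖c i‖ * ‖c j‖)) := by
        refine (Real.le_norm_self _).trans ?_
        rw [← norm_real, integral_sq_norm_sum_mul_exp]
        exact norm_sum_le_of_le _ fun i hi ↦ norm_sum_le_of_le _ fun j hj ↦
          norm_mul_integral_exp_le hδ hαβ (hsep i hi j hj)
    _ = (β - α) * ∑ i ∈ S, ‖c i‖ ^ 2 + 2 / δ * (∑ i ∈ S, ‖c i‖) ^ 2 := by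
        rw [sq (∑ i ∈ S, ‖c i‖), Finset.sum_mul_sum]
        simp only [Finset.sum_add_distrib, Finset.mul_sum]
        congr 1
        exact Finset.sum_congr rfl fun i hi ↦ by rw [Finset.sum_ite_eq, if_pos hi]
    _ ≤ (β - α) * ∑ i ∈ S, ‖c i‖ ^ 2 + 2 / δ * (S.card * ∑ i ∈ S, ‖c i‖ ^ 2) := by
        gcongr
        exact sq_sum_le_card_mul_sum_sq
    _ = (β - α + 2 / δ * S.card) * ∑ i ∈ S, ‖c i‖ ^ 2 := by ring

open ArithmeticFunction

variable {F : ArithmeticFunction ℂ} {W x : ℝ}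

lemma integral_sq_norm_lseries_le (hF : ∀ n : ℕ, x < Real.log n → F n = 0) (hαβ : α ≤ β) (σ : ℝ) :
    ∫ t : ℝ in α..β, ‖LSeries F (σ + t * I)‖ ^ 2 ≤ (β - α + 2 * Real.exp (2 * x)) *
      ∑ n ∈ Finset.Ioc 0 ⌊Real.exp x⌋₊, (‖F n‖ * (n : ℝ) ^ (-σ)) ^ 2 := by
  set N := ⌊Real.exp x⌋₊
  have hN : (N : ℝ) ≤ Real.exp x := Nat.floor_le (Real.exp_nonneg x)
  have hnorm : ∀ n : ℕ, ‖F n * ((n : ℝ) ^ (-σ) : ℝ)‖ = ‖F n‖ * (n : ℝ) ^ (-σ) := fun n ↦ by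
    rw [norm_mul, norm_real, Real.norm_of_nonneg (by positivity)]
  have hsep : ∀ m ∈ Finset.Ioc 0 N, ∀ n ∈ Finset.Ioc 0 N, m ≠ n →
      Real.exp (-x) ≤ |-Real.log m - -Real.log n| := by
    intro m hm n hn hmn
    have hN0 : 0 < N := (Finset.mem_Ioc.1 hm).1.trans_le (Finset.mem_Ioc.1 hm).2
    rw [neg_sub_neg, Real.exp_neg, ← one_div]
    exact (by gcongr : 1 / Real.exp x ≤ 1 / N).trans (one_div_le_abs_log_sub_log hn hm hmn.symm)
  simp only [lseries_eq_sum_exp hF]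
  refine (integral_sq_norm_sum_mul_exp_le (Real.exp_pos _) hsep hαβ).trans ?_
  simp only [hnorm]
  refine mul_le_mul_of_nonneg_right (add_le_add_right ?_ _) (by positivity)
  calc 2 / Real.exp (-x) * (Finset.Ioc 0 N).card = 2 * Real.exp x * N := by
        rw [Nat.card_Ioc, Nat.sub_zero, Real.exp_neg, div_inv_eq_mul]
    _ ≤ 2 * Real.exp x * Real.exp x := by gcongr
    _ = 2 * Real.exp (2 * x) := by rw [mul_assoc, ← Real.exp_add, two_mul x]

lemma sq_norm_pow_mul_rpow_le (hW : ∀ n, ‖F n‖ ≤ W * vonMangoldt n) {σ : ℝ} (hσ : 1 / 2 ≤ σ)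
    (k : ℕ) {n : ℕ} (hn : n ≠ 0) :
    (‖(F ^ k) n‖ * (n : ℝ) ^ (-σ)) ^ 2 ≤
      W ^ (2 * k) * Real.log n ^ k * ((vonMangoldt ^ k) n / n) := by
  have hΛ0 : 0 ≤ (vonMangoldt ^ k) n :=
    arithmeticFunction_pow_nonneg (fun _ ↦ vonMangoldt_nonneg) k n
  have hrpow : ((n : ℝ) ^ (-σ)) ^ 2 ≤ 1 / n := by
    rw [one_div, ← Real.rpow_neg_one, ← Real.rpow_mul_natCast n.cast_nonneg]
    exact Real.rpow_le_rpow_of_exponent_le (by exact_mod_cast Nat.one_le_iff_ne_zero.2 hn)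
      (by push_cast; linarith)
  calc (‖(F ^ k) n‖ * (n : ℝ) ^ (-σ)) ^ 2
      = ‖(F ^ k) n‖ ^ 2 * ((n : ℝ) ^ (-σ)) ^ 2 := mul_pow _ _ 2
    _ ≤ (W ^ k * (vonMangoldt ^ k) n) ^ 2 * (1 / n) := by
      gcongr
      exact norm_pow_apply_le hW k n
    _ = W ^ (2 * k) * (vonMangoldt ^ k) n * ((vonMangoldt ^ k) n / n) := by ring
    _ ≤ W ^ (2 * k) * Real.log n ^ k * ((vonMangoldt ^ k) n / n) := by
      refine mul_le_mul_of_nonneg_right (mul_le_mul_of_nonneg_left ?_ ?_)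
        (div_nonneg hΛ0 n.cast_nonneg)
      · exact vonMangoldt_pow_le_log_pow k n
      · exact (even_two_mul k).pow_nonneg W

lemma sum_sq_norm_pow_mul_rpow_le (hx : 0 ≤ x) (hW : ∀ n, ‖F n‖ ≤ W * vonMangoldt n) {σ : ℝ}
    (hσ : 1 / 2 ≤ σ) (k : ℕ) :
    ∑ n ∈ Finset.Ioc 0 ⌊Real.exp (k * x)⌋₊, (‖(F ^ k) n‖ * (n : ℝ) ^ (-σ)) ^ 2 ≤
      (2 * (W * (k * x)) ^ 2) ^ k := by
  set N := ⌊Real.exp (k * x)⌋₊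
  have hlogN : Real.log N ≤ k * x := by
    have hN0 : 0 < N := Nat.floor_pos.2 (Real.one_le_exp (by positivity))
    exact (Real.log_le_iff_le_exp (by exact_mod_cast hN0)).2 (Nat.floor_le (Real.exp_nonneg _))
  have hΛ0 : ∀ n, 0 ≤ (vonMangoldt ^ k) n :=
    arithmeticFunction_pow_nonneg (fun _ ↦ vonMangoldt_nonneg) k
  have hW0 : 0 ≤ W ^ (2 * k) := (even_two_mul k).pow_nonneg W
  have hterm : ∀ n ∈ Finset.Ioc 0 N, (‖(F ^ k) n‖ * (n : ℝ) ^ (-σ)) ^ 2 ≤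
      W ^ (2 * k) * (k * x) ^ k * ((vonMangoldt ^ k) n / n) := fun n hn ↦ by
    obtain ⟨hn0, hnN⟩ := Finset.mem_Ioc.1 hn
    have hlog : Real.log n ≤ k * x :=
      (Real.log_le_log (by exact_mod_cast hn0) (by exact_mod_cast hnN)).trans hlogN
    have hlogpow : Real.log n ^ k ≤ (k * x) ^ k :=
      pow_le_pow_left₀ (Real.log_natCast_nonneg n) hlog k
    exact (sq_norm_pow_mul_rpow_le hW hσ k hn0.ne').trans (mul_le_mul_of_nonneg_right
      (mul_le_mul_of_nonneg_left hlogpow hW0) (div_nonneg (hΛ0 n) n.cast_nonneg))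
  calc ∑ n ∈ Finset.Ioc 0 N, (‖(F ^ k) n‖ * (n : ℝ) ^ (-σ)) ^ 2
      ≤ W ^ (2 * k) * (k * x) ^ k * ∑ n ∈ Finset.Ioc 0 N, (vonMangoldt ^ k) n / n := by
        rw [Finset.mul_sum]
        exact Finset.sum_le_sum hterm
    _ ≤ W ^ (2 * k) * (k * x) ^ k * (2 * (k * x)) ^ k := by
        refine mul_le_mul_of_nonneg_left ?_ (mul_nonneg hW0 (by positivity))
        refine (sum_pow_div_le_pow_sum_div (fun _ ↦ vonMangoldt_nonneg) k N).trans
          (pow_le_pow_left₀ (Finset.sum_nonneg fun n _ ↦ ?_) ?_ k)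
        · exact div_nonneg vonMangoldt_nonneg n.cast_nonneg
        · exact (sum_vonMangoldt_div_le N).trans (by linarith)
    _ = (2 * (W * (k * x)) ^ 2) ^ k := by
        rw [pow_mul, ← mul_pow, ← mul_pow]
        ring

lemma integral_norm_lseries_pow_le (hx : 0 ≤ x) (hF : ∀ n : ℕ, x < Real.log n → F n = 0)
    (hW : ∀ n, ‖F n‖ ≤ W * vonMangoldt n) {σ : ℝ} (hσ : 1 / 2 ≤ σ) (hαβ : α ≤ β) (k : ℕ) :
    ∫ t : ℝ in α..β, ‖LSeries F (σ + t * I)‖ ^ (2 * k) ≤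
      (β - α + 2 * Real.exp (2 * (k * x))) * (2 * (W * (k * x)) ^ 2) ^ k := by
  calc ∫ t : ℝ in α..β, ‖LSeries F (σ + t * I)‖ ^ (2 * k)
      = ∫ t : ℝ in α..β, ‖LSeries (F ^ k : ArithmeticFunction ℂ) (σ + t * I)‖ ^ 2 := by
        simp only [lseries_pow hF, norm_pow, ← pow_mul, mul_comm]
    _ ≤ (β - α + 2 * Real.exp (2 * (k * x))) *
          ∑ n ∈ Finset.Ioc 0 ⌊Real.exp (k * x)⌋₊, (‖(F ^ k) n‖ * (n : ℝ) ^ (-σ)) ^ 2 :=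
        integral_sq_norm_lseries_le (fun n ↦ pow_apply_eq_zero_of_lt_log hF k) hαβ σ
    _ ≤ (β - α + 2 * Real.exp (2 * (k * x))) * (2 * (W * (k * x)) ^ 2) ^ k :=
        mul_le_mul_of_nonneg_left (sum_sq_norm_pow_mul_rpow_le hx hW hσ k)
          (add_nonneg (sub_nonneg.2 hαβ) (by positivity))

lemma continuous_lseries_of_eq_zero_of_lt_log (hF : ∀ n : ℕ, x < Real.log n → F n = 0) (σ : ℝ) :
    Continuous fun t : ℝ ↦ LSeries F (σ + t * I) := by
  simp only [lseries_eq_sum_exp hF]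
  fun_prop

end MeanValue

section SmoothedVonMangoldt

variable {a : ℝ}

lemma smoothedVonMangoldt_eq_zero (ha : 1 / 8 ≤ a) {n : ℕ} (hn : 4 * a < Real.log n) :
    smoothedVonMangoldt a n = 0 := by
  have hn0 : n ≠ 0 := by
    rintro rfl
    norm_num at hn
    linarith
  rw [smoothedVonMangoldt_apply, kernelWeight_eq_zero ha hn0 hn.le, mul_zero]

lemma norm_smoothedVonMangoldt_le (ha : 1 / 8 ≤ a) (n : ℕ) :
    ‖smoothedVonMangoldt a n‖ ≤ 36 * (π / a) * ArithmeticFunction.vonMangoldt n := by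
  obtain rfl | hn := eq_or_ne n 0
  · simp
  rw [smoothedVonMangoldt_apply, norm_mul, norm_real,
    Real.norm_of_nonneg ArithmeticFunction.vonMangoldt_nonneg, mul_comm]
  exact mul_le_mul_of_nonneg_right (norm_kernelWeight_le ha hn)
    ArithmeticFunction.vonMangoldt_nonneg

lemma smoothedVonMangoldt_one_div_eight : smoothedVonMangoldt (1 / 8) = 0 := by
  ext n
  obtain hn | hn := Nat.lt_or_ge n 2
  · interval_cases n <;> simp [smoothedVonMangoldt_apply]
  refine smoothedVonMangoldt_eq_zero le_rfl ?_
  have hlog : Real.log 2 ≤ Real.log n := Real.log_le_log two_pos (by exact_mod_cast hn)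
  linarith [Real.log_two_gt_d9]

lemma lseries_smoothedVonMangoldt_one_div_eight (s : ℂ) :
    LSeries (smoothedVonMangoldt (1 / 8)) s = 0 := by
  rw [smoothedVonMangoldt_one_div_eight]
  exact congrFun LSeries_zero s

lemma continuous_lseries_smoothedVonMangoldt (ha : 1 / 8 ≤ a) (σ : ℝ) :
    Continuous fun t : ℝ ↦ LSeries (smoothedVonMangoldt a) (σ + t * I) :=
  continuous_lseries_of_eq_zero_of_lt_log (fun _ ↦ smoothedVonMangoldt_eq_zero ha) σ

lemma integral_norm_lseries_smoothedVonMangoldt_pow_le (ha : 1 / 8 ≤ a) {σ : ℝ} (hσ : 1 / 2 ≤ σ)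
    {α β : ℝ} (hαβ : α ≤ β) (k : ℕ) :
    ∫ t : ℝ in α..β, ‖LSeries (smoothedVonMangoldt a) (σ + t * I)‖ ^ (2 * k) ≤
      (β - α + 2 * Real.exp (8 * a * k)) * (2 * (144 * π * k) ^ 2) ^ k := by
  have ha0 : 0 < a := by linarith
  convert integral_norm_lseries_pow_le (by linarith) (fun _ ↦ smoothedVonMangoldt_eq_zero ha)
    (norm_smoothedVonMangoldt_le ha) hσ hαβ k using 2
  · ring_nf
  · field_simp
    ring

end SmoothedVonMangoldt

/-! ### Moments of the multiplicities -/

lemma two_mul_sum_le_integral_of_window_sum_le {S : Finset ℝ} {w G : ℝ → ℝ} (hG : Continuous G)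
    {e α β : ℝ} (he : 0 ≤ e) (hαβ : α ≤ β) (hS : ∀ γ ∈ S, α ≤ γ - e ∧ γ + e ≤ β)
    (hle : ∀ t ∈ Set.Icc α β, ∑ γ ∈ S with |γ - t| ≤ e, w γ ≤ G t) :
    2 * e * ∑ γ ∈ S, w γ ≤ ∫ t in α..β, G t := by
  let window (γ : ℝ) : ℝ → ℝ := (Set.Icc (γ - e) (γ + e)).indicator fun _ ↦ w γ
  have hinteg (γ : ℝ) : IntegrableOn (window γ) (Set.Icc α β) :=
    ((integrable_indicator_iff measurableSet_Icc).2
      (integrableOn_const (by simp) enorm_ne_top)).integrableOn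
  have hwindow : ∀ γ ∈ S, ∫ t in Set.Icc α β, window γ t = 2 * e * w γ := by
    intro γ hγ
    obtain ⟨hα, hβ⟩ := hS γ hγ
    rw [setIntegral_indicator measurableSet_Icc,
      Set.inter_eq_self_of_subset_right (Set.Icc_subset_Icc hα hβ), setIntegral_const,
      Real.volume_real_Icc_of_le (by linarith), smul_eq_mul]
    ring
  have hsum (t : ℝ) : ∑ γ ∈ S, window γ t = ∑ γ ∈ S with |γ - t| ≤ e, w γ := by
    rw [Finset.sum_filter]
    refine Finset.sum_congr rfl fun γ _ ↦ ?_
    simp only [window, Set.indicator_apply, Set.mem_Icc, abs_le]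
    exact if_congr (by constructor <;> rintro ⟨_, _⟩ <;> constructor <;> linarith) rfl rfl
  calc 2 * e * ∑ γ ∈ S, w γ = ∫ t in Set.Icc α β, ∑ γ ∈ S, window γ t := by
        rw [integral_finsetSum S fun γ _ ↦ hinteg γ, Finset.sum_congr rfl hwindow, Finset.mul_sum]
    _ ≤ ∫ t in Set.Icc α β, G t :=
        setIntegral_mono_on (integrable_finsetSum S fun γ _ ↦ hinteg γ)
          hG.continuousOn.integrableOn_Icc measurableSet_Icc fun t ht ↦ (hsum t).le.trans (hle t ht)
    _ = ∫ t in α..β, G t := by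
        rw [intervalIntegral.integral_of_le hαβ, ← integral_Icc_eq_integral_Ioc]

lemma sum_pow_le_pow_sum_of_nonneg {ι : Type*} (S : Finset ι) {w : ι → ℝ}
    (hw : ∀ i ∈ S, 0 ≤ w i) {n : ℕ} (hn : n ≠ 0) : ∑ i ∈ S, w i ^ n ≤ (∑ i ∈ S, w i) ^ n := by
  obtain ⟨m, rfl⟩ := Nat.exists_eq_succ_of_ne_zero hn
  rw [pow_succ, Finset.mul_sum]
  refine Finset.sum_le_sum fun i hi ↦ ?_
  rw [pow_succ]
  exact mul_le_mul_of_nonneg_right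
    (pow_le_pow_left₀ (hw i hi) (Finset.single_le_sum hw hi) m) (hw i hi)

/-- A constant `H` such that, for the smoothing parameter of the `2 * k`-th moment, a window around
`t` contains at most `5 |D(t)| + H k` zeros counted with multiplicity, where `D` is the Dirichlet
series of the smoothed von Mangoldt function. -/
def windowConst : ℝ := 3294080 * π

lemma one_le_windowConst : 1 ≤ windowConst := by
  linarith [Real.pi_gt_three, windowConst.eq_1]

section DyadicBlock

variable {T t a e : ℝ} {k : ℕ}

lemma exp_logHeight (hT : 0 ≤ T) : Real.exp (logHeight T) = T + 4 := by
  rw [logHeight, abs_of_nonneg hT, Real.exp_log (by linarith)]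

/-- The smoothing parameter for the `2 * k`-th moment at height `T`: the Dirichlet polynomial it
gives has length `exp (4 * a)`, so that its `k`-th power has length about `√T`, unless this would
push `a` below the least admissible value `1 / 8`. -/
def smoothingParam (T : ℝ) (k : ℕ) : ℝ := max (1 / 8) (logHeight T / (8 * k))

lemma smoothingParam_eq (hk : k ≠ 0) :
    smoothingParam T k = 1 / 8 ∨ 8 * smoothingParam T k * k = logHeight T := by
  refine (max_choice _ _).imp id fun h ↦ ?_
  rw [smoothingParam, h]
  field_simp

lemma one_div_eight_le_smoothingParam : 1 / 8 ≤ smoothingParam T k := le_max_left _ _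

lemma eight_mul_smoothingParam_le (hk : k ≠ 0) : 8 * smoothingParam T k ≤ logHeight T := by
  have hlog := one_le_logHeight T
  have hk1 : (1 : ℝ) ≤ k := by exact_mod_cast Nat.one_le_iff_ne_zero.2 hk
  have hdiv : logHeight T / (8 * k) ≤ logHeight T / 8 := by gcongr; linarith
  linarith [max_le (by linarith : 1 / 8 ≤ logHeight T / 8) hdiv, smoothingParam.eq_1 T k]

lemma logHeight_le_mul_smoothingParam (hk : k ≠ 0) :
    logHeight T ≤ 8 * k * smoothingParam T k := by
  have hk0 : (0 : ℝ) < 8 * k := by positivity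
  exact (div_le_iff₀' hk0).1 (le_max_right _ _)

lemma sum_window_ordMult_le_of_mem_block (hRH : RiemannHypothesis) (S : Finset ℝ) (hT : 1 ≤ T)
    (hk : k ≠ 0) (ha : a = smoothingParam T k) (he : e = 1 / (32 * a)) (htl : T / 4 ≤ t)
    (htu : t ≤ T + 1 / 4) :
    ∑ γ ∈ S with |γ - t| ≤ e, (ordMult γ : ℝ) ≤
      5 * ‖LSeries (smoothedVonMangoldt a) ((1 / 2 + e : ℝ) + t * I)‖ + windowConst * k := by
  have ha8 : 1 / 8 ≤ a := ha ▸ one_div_eight_le_smoothingParam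
  have ha0 : 0 < a := by linarith
  have ht0 : 0 < t := by linarith
  have hk1 : (1 : ℝ) ≤ k := by exact_mod_cast Nat.one_le_iff_ne_zero.2 hk
  have hexp : 32768 * π * Real.exp (6 * a) / |t| ≤ 655360 * π * k := by
    rw [abs_of_pos ht0, div_le_iff₀ ht0]
    calc 32768 * π * Real.exp (6 * a) ≤ 32768 * π * (20 * t) := by
          gcongr
          have h8a : 8 * a ≤ logHeight T := ha ▸ eight_mul_smoothingParam_le hk
          have : Real.exp (6 * a) ≤ Real.exp (logHeight T) := by gcongr; linarith
          linarith [exp_logHeight (by linarith : 0 ≤ T)]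
      _ = 655360 * π * 1 * t := by ring
      _ ≤ 655360 * π * k * t := by gcongr
  have hlog : logHeight t ≤ 2 * logHeight T := by
    rw [logHeight, logHeight, abs_of_pos ht0, abs_of_nonneg (by linarith), ← Nat.cast_two,
      ← Real.log_pow]
    exact Real.log_le_log (by linarith) (by nlinarith)
  have hmain : 216 * (π / a) * logHeight t ≤ 3456 * π * k := by
    have hka : logHeight T ≤ 8 * k * a := ha ▸ logHeight_le_mul_smoothingParam hk
    calc 216 * (π / a) * logHeight t ≤ 216 * (π / a) * (2 * (8 * k * a)) := by gcongr; linarith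
      _ = 3456 * π * k := by field_simp; ring
  have hwindow := sum_window_ordMult_le hRH S ha8 ht0.ne' he
  push_cast
  rw [windowConst]
  linarith

lemma sum_window_ordMult_pow_le_of_mem_block (hRH : RiemannHypothesis) (S : Finset ℝ)
    (hT : 1 ≤ T) (hk : k ≠ 0) (ha : a = smoothingParam T k) (he : e = 1 / (32 * a))
    (htl : T / 4 ≤ t) (htu : t ≤ T + 1 / 4) :
    ∑ γ ∈ S with |γ - t| ≤ e, (ordMult γ : ℝ) ^ (2 * k) ≤
      (5 * ‖LSeries (smoothedVonMangoldt a) ((1 / 2 + e : ℝ) + t * I)‖ + windowConst * k) ^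
        (2 * k) :=
  (sum_pow_le_pow_sum_of_nonneg _ (fun _ _ ↦ Nat.cast_nonneg _) (by lia)).trans
    (pow_le_pow_left₀ (Finset.sum_nonneg fun _ _ ↦ Nat.cast_nonneg _)
      (sum_window_ordMult_le_of_mem_block hRH S hT hk ha he htl htu) _)

lemma integral_norm_lseries_pow_le_of_block (hT : 1 ≤ T) (hk : k ≠ 0) (ha : a = smoothingParam T k)
    (he0 : 0 ≤ e) (he : e ≤ 1 / 4) :
    ∫ t : ℝ in T / 2 - e..T + e,
        ‖LSeries (smoothedVonMangoldt a) ((1 / 2 + e : ℝ) + t * I)‖ ^ (2 * k) ≤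
      11 * T * (2 * (144 * π * k) ^ 2) ^ k := by
  rcases smoothingParam_eq (T := T) hk with ha' | ha' <;> rw [← ha] at ha'
  · simp only [ha', lseries_smoothedVonMangoldt_one_div_eight, norm_zero,
      zero_pow (mul_ne_zero two_ne_zero hk), intervalIntegral.integral_zero]
    positivity
  · refine (integral_norm_lseries_smoothedVonMangoldt_pow_le
      (ha ▸ one_div_eight_le_smoothingParam) (by linarith) (by linarith) k).trans ?_
    rw [ha', exp_logHeight (by linarith)]
    gcongr
    linarith

lemma integral_window_bound_pow_le (hT : 1 ≤ T) (hk : k ≠ 0) (ha : a = smoothingParam T k)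
    (he0 : 0 ≤ e) (he : e ≤ 1 / 4) :
    ∫ t : ℝ in T / 2 - e..T + e,
        (5 * ‖LSeries (smoothedVonMangoldt a) ((1 / 2 + e : ℝ) + t * I)‖ + windowConst * k) ^
          (2 * k) ≤
      2 ^ (2 * k - 1) * (12 * T * (windowConst * k) ^ (2 * k)) := by
  have hcont := (continuous_lseries_smoothedVonMangoldt (a := a)
    (ha ▸ one_div_eight_le_smoothingParam) (1 / 2 + e)).norm
  set D : ℝ → ℝ := fun t ↦ ‖LSeries (smoothedVonMangoldt a) ((1 / 2 + e : ℝ) + t * I)‖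
  set B := (windowConst * k) ^ (2 * k) with hB
  have hH : 0 ≤ windowConst := zero_le_one.trans one_le_windowConst
  have hconst : (5 : ℝ) ^ (2 * k) * (2 * (144 * π * k) ^ 2) ^ k ≤ B := by
    rw [hB, pow_mul, pow_mul, ← mul_pow]
    gcongr
    rw [windowConst]
    nlinarith [sq_nonneg (π * k)]
  have hmoment : 5 ^ (2 * k) * ∫ t in T / 2 - e..T + e, D t ^ (2 * k) ≤ 11 * T * B :=
    calc 5 ^ (2 * k) * ∫ t in T / 2 - e..T + e, D t ^ (2 * k)
        ≤ 5 ^ (2 * k) * (11 * T * (2 * (144 * π * k) ^ 2) ^ k) := by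
          gcongr
          exact integral_norm_lseries_pow_le_of_block hT hk ha he0 he
      _ = 11 * T * (5 ^ (2 * k) * (2 * (144 * π * k) ^ 2) ^ k) := by ring
      _ ≤ 11 * T * B := by gcongr
  calc ∫ t in T / 2 - e..T + e, (5 * D t + windowConst * k) ^ (2 * k)
      ≤ ∫ t in T / 2 - e..T + e, 2 ^ (2 * k - 1) * (5 ^ (2 * k) * D t ^ (2 * k) + B) := by
        refine intervalIntegral.integral_mono (by linarith)
          (Continuous.intervalIntegrable (by fun_prop) _ _)
          (Continuous.intervalIntegrable (by fun_prop) _ _) fun t ↦ ?_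
        have hDt : 0 ≤ D t := norm_nonneg _
        have h := add_pow_le (mul_nonneg (by norm_num : (0 : ℝ) ≤ 5) hDt)
          (by positivity : 0 ≤ windowConst * k) (2 * k)
        rwa [mul_pow 5] at h
    _ = 2 ^ (2 * k - 1) *
        (5 ^ (2 * k) * (∫ t in T / 2 - e..T + e, D t ^ (2 * k)) + (T / 2 + 2 * e) * B) := by
        rw [intervalIntegral.integral_const_mul, intervalIntegral.integral_add
          (Continuous.intervalIntegrable (by fun_prop) _ _) intervalIntegrable_const,
          intervalIntegral.integral_const_mul, intervalIntegral.integral_const, smul_eq_mul]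
        ring
    _ ≤ 2 ^ (2 * k - 1) * (11 * T * B + T * B) := by
        gcongr
        linarith
    _ = 2 ^ (2 * k - 1) * (12 * T * B) := by ring

lemma twentyFour_mul_two_pow_le (hk : k ≠ 0) : (24 : ℝ) * 2 ^ (2 * k - 1) ≤ 400 ^ (2 * k) :=
  calc (24 : ℝ) * 2 ^ (2 * k - 1) ≤ 200 ^ (2 * k) * 2 ^ (2 * k) := by
        gcongr
        · exact (by norm_num : (24 : ℝ) ≤ 200).trans (le_self_pow₀ (by norm_num) (by lia))
        · norm_num
        · lia
    _ = 400 ^ (2 * k) := by rw [← mul_pow]; norm_num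

lemma sum_ordMult_pow_le_of_mem_Icc (hRH : RiemannHypothesis) {S : Finset ℝ} (hT : 1 ≤ T)
    (hk : k ≠ 0) (hS : ∀ γ ∈ S, γ ∈ Set.Icc (T / 2) T) :
    ∑ γ ∈ S, (ordMult γ : ℝ) ^ (2 * k) ≤
      (400 * windowConst * k) ^ (2 * k) * (T * logHeight T) := by
  obtain ⟨a, ha⟩ : ∃ a, a = smoothingParam T k := ⟨_, rfl⟩
  obtain ⟨e, he⟩ : ∃ e, e = 1 / (32 * a) := ⟨_, rfl⟩
  have hH : 0 ≤ windowConst := zero_le_one.trans one_le_windowConst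
  have hlog := one_le_logHeight T
  have ha8 : 1 / 8 ≤ a := ha ▸ one_div_eight_le_smoothingParam
  have h8a : 8 * a ≤ logHeight T := ha ▸ eight_mul_smoothingParam_le hk
  have he0 : 0 ≤ e := by rw [he, one_div_nonneg]; linarith
  have he4 : e ≤ 1 / 4 := by
    rw [he]
    exact one_div_le_one_div_of_le (by norm_num) (by linarith)
  have hcont := (continuous_lseries_smoothedVonMangoldt ha8 (1 / 2 + e)).norm
  have hsum := (two_mul_sum_le_integral_of_window_sum_le (by fun_prop) he0 (by linarith)
    (fun γ hγ ↦ ⟨by linarith [(hS γ hγ).1], by linarith [(hS γ hγ).2]⟩)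
    fun t ht ↦ sum_window_ordMult_pow_le_of_mem_block hRH S hT hk ha he (by linarith [ht.1])
      (by linarith [ht.2])).trans (integral_window_bound_pow_le hT hk ha he0 he4)
  have hscale : 16 * a * (2 * e) = 1 := by
    rw [he]
    field_simp [(by linarith : a ≠ 0)]
    norm_num
  calc ∑ γ ∈ S, (ordMult γ : ℝ) ^ (2 * k)
      = 16 * a * (2 * e * ∑ γ ∈ S, (ordMult γ : ℝ) ^ (2 * k)) := by
        rw [← mul_assoc, hscale, one_mul]
    _ ≤ 16 * (logHeight T / 8) * (2 ^ (2 * k - 1) * (12 * T * (windowConst * k) ^ (2 * k))) := by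
        gcongr
        linarith
    _ = 24 * 2 ^ (2 * k - 1) * (windowConst * k) ^ (2 * k) * (T * logHeight T) := by ring
    _ ≤ 400 ^ (2 * k) * (windowConst * k) ^ (2 * k) * (T * logHeight T) := by
        gcongr
        exact twentyFour_mul_two_pow_le hk
    _ = (400 * windowConst * k) ^ (2 * k) * (T * logHeight T) := by
        rw [← mul_pow]
        ring

end DyadicBlock

lemma sum_window_quarter_ordMult_le (hRH : RiemannHypothesis) (S : Finset ℝ) {t : ℝ}
    (ht : 1 / 4 ≤ t) (ht1 : t ≤ 1) :
    ∑ γ ∈ S with |γ - t| ≤ 1 / 4, (ordMult γ : ℝ) ≤ windowConst := by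
  have ht0 : 0 < t := by linarith
  have hpi := Real.pi_pos
  have hwindow := sum_window_ordMult_le (a := 1 / 8) (e := 1 / 4) hRH S le_rfl ht0.ne' (by norm_num)
  rw [lseries_smoothedVonMangoldt_one_div_eight, norm_zero, zero_add] at hwindow
  have hexp : Real.exp (6 * (1 / 8)) ≤ 3 := by
    have : Real.exp (6 * (1 / 8)) ≤ Real.exp 1 := by gcongr; norm_num
    linarith [Real.exp_one_lt_d9]
  have hmain : 32768 * π * Real.exp (6 * (1 / 8)) / |t| ≤ 393216 * π := by
    rw [abs_of_pos ht0, div_le_iff₀ ht0]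
    calc 32768 * π * Real.exp (6 * (1 / 8)) ≤ 32768 * π * 3 := by gcongr
      _ = 393216 * π * (1 / 4) := by ring
      _ ≤ 393216 * π * t := by gcongr
  have hlog : 216 * (π / (1 / 8)) * logHeight t ≤ 216 * (π / (1 / 8)) * 4 := by
    gcongr
    linarith [logHeight_le_abs_add_three t, abs_of_pos ht0]
  rw [windowConst]
  linarith

lemma sum_ordMult_le_of_mem_Ioc_zero_one (hRH : RiemannHypothesis) {S : Finset ℝ}
    (hS : ∀ γ ∈ S, γ ∈ Set.Ioc 0 1) : ∑ γ ∈ S, (ordMult γ : ℝ) ≤ 2 * windowConst := by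
  have hcover : S ⊆ S.filter (|· - 1 / 4| ≤ 1 / 4) ∪ S.filter (|· - 3 / 4| ≤ 1 / 4) := by
    intro γ hγ
    obtain ⟨h0, h1⟩ := hS γ hγ
    simp only [Finset.mem_union, Finset.mem_filter, hγ, true_and, abs_le]
    rcases le_total γ (1 / 2) with h | h
    · left; constructor <;> linarith
    · right; constructor <;> linarith
  calc ∑ γ ∈ S, (ordMult γ : ℝ)
      ≤ ∑ γ ∈ S.filter (|· - 1 / 4| ≤ 1 / 4) ∪ S.filter (|· - 3 / 4| ≤ 1 / 4), (ordMult γ : ℝ) :=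
        Finset.sum_le_sum_of_subset_of_nonneg hcover fun _ _ _ ↦ Nat.cast_nonneg _
    _ ≤ ∑ γ ∈ S with |γ - 1 / 4| ≤ 1 / 4, (ordMult γ : ℝ) +
        ∑ γ ∈ S with |γ - 3 / 4| ≤ 1 / 4, (ordMult γ : ℝ) := by
        rw [← Finset.sum_union_inter]
        exact le_add_of_nonneg_right (Finset.sum_nonneg fun _ _ ↦ Nat.cast_nonneg _)
    _ ≤ 2 * windowConst := by
        linarith [sum_window_quarter_ordMult_le hRH S (t := 1 / 4) le_rfl (by norm_num),
          sum_window_quarter_ordMult_le hRH S (t := 3 / 4) (by norm_num) (by norm_num)]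

lemma sum_ordMult_pow_le_of_mem_Ioc_zero_one (hRH : RiemannHypothesis) {S : Finset ℝ} {k : ℕ}
    (hk : k ≠ 0) (hS : ∀ γ ∈ S, γ ∈ Set.Ioc 0 1) :
    ∑ γ ∈ S, (ordMult γ : ℝ) ^ (2 * k) ≤ (400 * windowConst * k) ^ (2 * k) := by
  refine (sum_pow_le_pow_sum_of_nonneg _ (fun _ _ ↦ Nat.cast_nonneg _) (by lia)).trans ?_
  refine pow_le_pow_left₀ (Finset.sum_nonneg fun _ _ ↦ Nat.cast_nonneg _) ?_ _
  have hH := one_le_windowConst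
  have hk1 : (1 : ℝ) ≤ k := by exact_mod_cast Nat.one_le_iff_ne_zero.2 hk
  calc ∑ γ ∈ S, (ordMult γ : ℝ) ≤ 2 * windowConst := sum_ordMult_le_of_mem_Ioc_zero_one hRH hS
    _ ≤ 400 * windowConst * 1 := by linarith
    _ ≤ 400 * windowConst * k := by gcongr

lemma sum_ordMult_pow_le_of_mem_Ioc (hRH : RiemannHypothesis) {k : ℕ} (hk : k ≠ 0) (j : ℕ)
    {T : ℝ} (hT : 1 ≤ T) (hTj : T ≤ 2 ^ j) {S : Finset ℝ} (hS : ∀ γ ∈ S, γ ∈ Set.Ioc 0 T) :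
    ∑ γ ∈ S, (ordMult γ : ℝ) ^ (2 * k) ≤
      2 * ((400 * windowConst * k) ^ (2 * k) * (T * logHeight T)) := by
  set Q := (400 * windowConst * k) ^ (2 * k)
  have hQ0 : 0 ≤ Q := (even_two_mul k).pow_nonneg _
  induction j generalizing T S with
  | zero =>
    have hbase := sum_ordMult_pow_le_of_mem_Ioc_zero_one hRH hk
      fun γ hγ ↦ ⟨(hS γ hγ).1, (hS γ hγ).2.trans (by simpa using hTj)⟩
    have hTl : 1 ≤ T * logHeight T := one_le_mul_of_one_le_of_one_le hT (one_le_logHeight T)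
    linarith [le_mul_of_one_le_right hQ0 hTl]
  | succ j ih =>
    have hupper : ∑ γ ∈ S with ¬ γ ≤ T / 2, (ordMult γ : ℝ) ^ (2 * k) ≤ Q * (T * logHeight T) :=
      sum_ordMult_pow_le_of_mem_Icc hRH hT hk fun γ hγ ↦
        have ⟨hγS, hγT⟩ := Finset.mem_filter.1 hγ
        ⟨(not_le.1 hγT).le, (hS γ hγS).2⟩
    have hlower : ∑ γ ∈ S with γ ≤ T / 2, (ordMult γ : ℝ) ^ (2 * k) ≤ Q * (T * logHeight T) := by
      have hmem : ∀ γ ∈ S.filter (· ≤ T / 2), γ ∈ Set.Ioc 0 (T / 2) := fun γ hγ ↦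
        have ⟨hγS, hγT⟩ := Finset.mem_filter.1 hγ
        ⟨(hS γ hγS).1, hγT⟩
      rcases lt_or_ge T 2 with hT2 | hT2
      · have hTl : 1 ≤ T * logHeight T := one_le_mul_of_one_le_of_one_le hT (one_le_logHeight T)
        exact (sum_ordMult_pow_le_of_mem_Ioc_zero_one hRH hk fun γ hγ ↦
          ⟨(hmem γ hγ).1, (hmem γ hγ).2.trans (by linarith)⟩).trans
          (le_mul_of_one_le_right hQ0 hTl)
      · have hmono : logHeight (T / 2) ≤ logHeight T := by
          rw [logHeight, logHeight, abs_of_nonneg (by linarith), abs_of_nonneg (by linarith)]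
          exact Real.log_le_log (by linarith) (by linarith)
        calc ∑ γ ∈ S with γ ≤ T / 2, (ordMult γ : ℝ) ^ (2 * k)
            ≤ 2 * (Q * (T / 2 * logHeight (T / 2))) :=
              ih (by linarith) (by rw [pow_succ] at hTj; linarith) hmem
          _ ≤ 2 * (Q * (T / 2 * logHeight T)) := by gcongr
          _ = Q * (T * logHeight T) := by ring
    rw [← Finset.sum_filter_add_sum_filter_not S (· ≤ T / 2)]
    linarith

lemma logHeight_le_three_mul_log {T : ℝ} (hT : 2 ≤ T) : logHeight T ≤ 3 * Real.log T := by
  have hcube : T + 4 ≤ T ^ 3 := by nlinarith [mul_self_nonneg (T - 2), mul_self_nonneg T]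
  calc logHeight T = Real.log (T + 4) := by rw [logHeight, abs_of_nonneg (by linarith)]
    _ ≤ Real.log (T ^ 3) := Real.log_le_log (by linarith) hcube
    _ = 3 * Real.log T := by rw [Real.log_pow, Nat.cast_ofNat]

lemma six_mul_mul_pow_two_mul_le {E : ℝ} (hE : 1 ≤ E) {k : ℕ} (hk : k ≠ 0) :
    6 * (E * k) ^ (2 * k) ≤ (12 * E ^ 2 * k) ^ (2 * k - 1) := by
  obtain ⟨m, hm⟩ : ∃ m, 2 * k = m + 1 := ⟨2 * k - 1, by lia⟩
  have hm0 : m ≠ 0 := by lia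
  have hkm : (k : ℝ) ≤ 2 ^ m := by
    exact_mod_cast Nat.lt_two_pow_self.le.trans (Nat.pow_le_pow_right two_pos (by lia : k ≤ m))
  rw [hm, Nat.add_sub_cancel]
  calc 6 * (E * k) ^ (m + 1) = 6 * (k * E * (E * k) ^ m) := by ring
    _ ≤ 6 ^ m * (2 ^ m * E ^ m * (E * k) ^ m) := by
        gcongr
        · exact le_self_pow₀ (by norm_num) hm0
        · exact le_self_pow₀ hE hm0
    _ = (12 * E ^ 2 * k) ^ m := by
        rw [← mul_pow, ← mul_pow, ← mul_pow]
        ring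

lemma sum_ordMult_pow_le (hRH : RiemannHypothesis) {T : ℝ} (hT : 2 ≤ T) {k : ℕ} (hk : k ≠ 0)
    {S : Finset ℝ} (hS : ∀ γ ∈ S, γ ∈ Set.Ioc 0 T) :
    ∑ γ ∈ S, (ordMult γ : ℝ) ^ (2 * k) ≤
      (12 * (400 * windowConst) ^ 2 * k) ^ (2 * k - 1) * (T * Real.log T) := by
  obtain ⟨j, hj⟩ := pow_unbounded_of_one_lt T one_lt_two
  have hlog : 0 ≤ Real.log T := Real.log_nonneg (by linarith)
  set E := 400 * windowConst
  calc ∑ γ ∈ S, (ordMult γ : ℝ) ^ (2 * k)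
      ≤ 2 * ((E * k) ^ (2 * k) * (T * logHeight T)) :=
        sum_ordMult_pow_le_of_mem_Ioc hRH hk j (by linarith) hj.le hS
    _ ≤ 2 * ((E * k) ^ (2 * k) * (T * (3 * Real.log T))) := by
        have := (even_two_mul k).pow_nonneg (E * k)
        gcongr
        exact logHeight_le_three_mul_log hT
    _ = 6 * (E * k) ^ (2 * k) * (T * Real.log T) := by ring
    _ ≤ (12 * E ^ 2 * k) ^ (2 * k - 1) * (T * Real.log T) := by
        gcongr
        exact six_mul_mul_pow_two_mul_le (by linarith [one_le_windowConst]) hk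

lemma finite_zetaOrds (T : ℝ) : (zetaOrds T).Finite := by
  have hcompact : IsCompact ((fun γ : ℝ ↦ (1 / 2 + γ * I : ℂ)) '' Set.Icc 0 T) :=
    isCompact_Icc.image (by fun_prop)
  have hinj : Function.Injective fun γ : ℝ ↦ (1 / 2 + γ * I : ℂ) := fun γ γ' h ↦ by simpa using h
  refine (hcompact.inter_riemannZetaZeros_finite.preimage hinj.injOn).subset fun γ hγ ↦ ?_
  exact ⟨Set.mem_image_of_mem _ ⟨hγ.1.le, hγ.2.1⟩, hγ.2.2⟩

end

/-- **Proposition 2, multiplicity bound.** Assume RH. There is a positive absolute constant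
`C` such that for all `T ≥ 2` and all positive integers `k`,
`Σ_{0<γ≤T} m(γ)^{2k-1} = Σ_{0<γ_d≤T} m(γ_d)^{2k} ≤ (Ck)^{2k-1} T log T`, where the first
sum is over ordinates with multiplicity and the second over distinct ordinates. -/
theorem multiplicity_moment (hRH : RiemannHypothesis) :
    ∃ C : ℝ, 0 < C ∧ ∀ T : ℝ, 2 ≤ T → ∀ k : ℕ, 1 ≤ k →
      (∑ᶠ γ ∈ zetaOrds T, (ordMult γ : ℝ) * (ordMult γ : ℝ) ^ (2 * k - 1)) =
          (∑ᶠ γ ∈ zetaOrds T, (ordMult γ : ℝ) ^ (2 * k)) ∧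
        (∑ᶠ γ ∈ zetaOrds T, (ordMult γ : ℝ) ^ (2 * k)) ≤
          (C * k) ^ (2 * k - 1) * (T * Real.log T) := by
  refine ⟨12 * (400 * windowConst) ^ 2, ?_, fun T hT k hk ↦ ⟨?_, ?_⟩⟩
  · have hH := one_le_windowConst
    positivity
  · have hexponent : 2 * k - 1 + 1 = 2 * k := by lia
    simp only [← pow_succ', hexponent]
  · rw [finsum_mem_eq_finite_toFinset_sum _ (finite_zetaOrds T)]
    refine sum_ordMult_pow_le hRH hT (Nat.one_le_iff_ne_zero.1 hk) fun γ hγ ↦ ?_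
    rw [Set.Finite.mem_toFinset] at hγ
    exact ⟨hγ.1, hγ.2.1⟩
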